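/- arXiv:2410.04909 — 6 statements merged into one kernel-verified Lean document; each statement's English description precedes it below -/
import Mathlib

section
/- Let n ≥ 1, let p be an n×n complex Hermitian matrix with p·p = c²·I for a real number c ≠ 0, let L be an n×n Hermitian matrix with L·L = I that anticommutes with p (L·p = −p·L), and let Π be an n×n orthogonal projection (Π = Πᴴ = Π·Π) commuting with L. Then trace(Π₊·Π·Π₊) = (1/2)·trace(Π), where Π₊ is the (+c)-spectral projection of p. -/
/-!
Since `Π₊` is idempotent, cyclicity gives `tr (Π₊ Π Π₊) = tr (Π₊ Π) = tr Π / 2 + tr (p Π) / (2c)`.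
Conjugation by the involution `L` fixes `Π` and negates `p`, so `tr (p Π) = -tr (p Π) = 0`.
-/

open Matrix

/-- The spectral projection onto the `(+c)`-eigenspace of a Hermitian matrix `p`
with `p * p = c² • 1`. -/
noncomputable def piPlus {n : ℕ} (c : ℝ) (p : Matrix (Fin n) (Fin n) ℂ) :
    Matrix (Fin n) (Fin n) ℂ :=
  (1 / (2 * (c : ℂ))) • ((c : ℂ) • (1 : Matrix (Fin n) (Fin n) ℂ) + p)

theorem trace_mul_eq_zero_of_anticomm {n : ℕ} (p L Pr : Matrix (Fin n) (Fin n) ℂ)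
    (hLL : L * L = 1) (hLp : L * p = -(p * L)) (hLPr : L * Pr = Pr * L) :
    (p * Pr).trace = 0 := by
  have h : (p * Pr).trace = -(p * Pr).trace := by
    calc (p * Pr).trace = (L * (L * (p * Pr))).trace := by
          rw [← Matrix.mul_assoc L L, hLL, Matrix.one_mul]
      _ = (L * p * (Pr * L)).trace := by
          rw [Matrix.trace_mul_comm]; simp only [Matrix.mul_assoc]
      _ = (-(p * (L * L) * Pr)).trace := by
          rw [← hLPr, hLp]; simp only [Matrix.mul_assoc, Matrix.neg_mul]
      _ = -(p * Pr).trace := by rw [hLL, Matrix.mul_one, Matrix.trace_neg]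
  exact self_eq_neg.mp h

theorem piPlus_mul_self {n : ℕ} (c : ℝ) (hc : c ≠ 0) (p : Matrix (Fin n) (Fin n) ℂ)
    (hpp : p * p = ((c : ℂ) ^ 2) • (1 : Matrix (Fin n) (Fin n) ℂ)) :
    piPlus c p * piPlus c p = piPlus c p := by
  have hc' : (c : ℂ) ≠ 0 := by exact_mod_cast hc
  simp only [piPlus, Matrix.smul_mul, Matrix.mul_smul, Matrix.add_mul, Matrix.mul_add,
    Matrix.one_mul, Matrix.mul_one, hpp]
  match_scalars <;> field_simp <;> norm_num

/-- Lemma `dim`: the orthogonal projection `Π`, commuting with the Hermitian unitary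
correction operator `L`, is split evenly between the two eigenspaces of `p`. -/
theorem trace_split_evenly
    {n : ℕ} (hn : 1 ≤ n) (c : ℝ) (hc : c ≠ 0)
    (p L Pr : Matrix (Fin n) (Fin n) ℂ)
    (hp : p.IsHermitian)
    (hpp : p * p = ((c : ℂ) ^ 2) • (1 : Matrix (Fin n) (Fin n) ℂ))
    (hLherm : L.IsHermitian) (hLL : L * L = 1)
    (hLp : L * p = -(p * L))
    (hPrherm : Pr = Prᴴ) (hPrproj : Pr = Pr * Pr)
    (hLPr : L * Pr = Pr * L) :
    (piPlus c p * Pr * piPlus c p).trace = (1 / 2 : ℂ) * Pr.trace := by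
  have hc' : (c : ℂ) ≠ 0 := by exact_mod_cast hc
  rw [Matrix.trace_mul_comm, ← Matrix.mul_assoc, piPlus_mul_self c hc p hpp, piPlus,
    Matrix.smul_mul, Matrix.add_mul, Matrix.smul_mul, Matrix.one_mul, Matrix.trace_smul,
    Matrix.trace_add, Matrix.trace_smul, trace_mul_eq_zero_of_anticomm p L Pr hLL hLp hLPr,
    smul_eq_mul, smul_eq_mul]
  field_simp
  ring
end

section
/- Let n ≥ 1 and let A be a unital star-subalgebra of the n×n complex matrices (a subalgebra containing the identity and closed under conjugate transpose). Then there exist k ≥ 1, positive integers d₁,…,d_k and e₁,…,e_k, a bijection σ : Fin n ≃ Σ i, (Fin dᵢ × Fin eᵢ) (so that Σᵢ dᵢ·eᵢ = n), and an n×n unitary matrix U, such that A = { U · M · Uᴴ : M is an n×n matrix whose entries, indexed through σ by triples (i,a,x) and (j,b,y) with i,j ∈ Fin k, a ∈ Fin dᵢ, x ∈ Fin eᵢ, b ∈ Fin d_j, y ∈ Fin e_j, satisfy M[(i,a,x),(j,b,y)] = 0 unless i = j and x = y, and M[(i,a,x),(i,b,x)] = Bᵢ[a,b] for some family of matrices Bᵢ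 ∈ Matrix (Fin dᵢ) (Fin dᵢ) ℂ }. -/
open Matrix

/-!
The algebra `A` is described through a system of matrix units built from minimal projections.

* If `p` is a minimal projection of `A`, then `p A p = ℂ p` (`IsMinProj.corner`): a nonzero
  self-adjoint `h ∈ p A p` has a spectral projection for a nonzero eigenvalue `l`; it lies in `A`
  (being a polynomial in `h`) and below `p`, hence equals `p`, so `h = l p`.
* Two minimal projections `p`, `q` of `A` satisfy `p A q = 0` unless they are the final and initial
  projections of a partial isometry in `A` (`IsMinProj.exists_partialIsometry`), namely of a
  rescaled nonzero element of `p A q`.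
* The identity is a sum of pairwise orthogonal minimal projections `P s`
  (`exists_minProj_decomp`).

Group the `P s` into classes `i`, two being equivalent if a partial isometry of `A` relates them. In
each class fix a representative `R i`, partial isometries `v i s ∈ A` from `R i` to `P s`, and a
matrix `W i` whose columns are an orthonormal basis of the range of `R i`. The columns of all the
`v i s * W i` then form an orthonormal basis of `ℂⁿ`. For `N ∈ A` the block of `N` between
`v i s * W i` and `v j t * W j` vanishes when `i ≠ j`, and is a scalar when `i = j` because
`(v i s)ᴴ * N * v i t` lies in `R i * A * R i = ℂ (R i)`. Conversely, every matrix of the required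
form is a combination of the elements `v i s * (v i t)ᴴ` of `A`. Here `d i` is the size of the
class and `e i` the rank of `R i`.
-/

/-! ### Minimal projections -/

/-- `p` is a minimal projection of the star-subalgebra `A`: a nonzero projection in `A` such that
the only nonzero projection `q ∈ A` below it is `p` itself. The order relation `q ≤ p` is expressed
as `p * q = q`. -/
def IsMinProj {n : ℕ} (A : StarSubalgebra ℂ (Matrix (Fin n) (Fin n) ℂ))
    (p : Matrix (Fin n) (Fin n) ℂ) : Prop :=
  p ∈ A ∧ IsStarProjection p ∧ p ≠ 0 ∧
    ∀ q ∈ A, IsStarProjection q → q ≠ 0 → p * q = q → q = p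

section

open scoped ComplexOrder

variable {n : ℕ} {A : StarSubalgebra ℂ (Matrix (Fin n) (Fin n) ℂ)}

/-- A nonzero self-adjoint `h ∈ A` has a nonzero eigenvalue `l` whose spectral projection `q` lies
in `A`. The factorization `q = h * g` records that the range of `q` is contained in that of `h`. -/
theorem exists_spectral_proj {h : Matrix (Fin n) (Fin n) ℂ} (hA : h ∈ A)
    (hs : IsSelfAdjoint h) (h0 : h ≠ 0) :
    ∃ (q g : Matrix (Fin n) (Fin n) ℂ) (l : ℝ), q ∈ A ∧ IsStarProjection q ∧ q ≠ 0 ∧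
      q = h * g ∧ q * h = (l : ℂ) • q := by
  obtain ⟨l, hl, hl0⟩ : ∃ l ∈ spectrum ℝ h, l ≠ 0 := by
    by_contra! hc
    apply h0
    rw [← cfc_id ℝ h hs, cfc_congr (f := id) (g := fun _ => (0:ℝ)) (fun x hx => hc x hx),
      cfc_const_zero]
  have hfin : (spectrum ℝ h).Finite := Matrix.finite_real_spectrum
  have hcont : ∀ f : ℝ → ℝ, ContinuousOn f (spectrum ℝ h) := fun f => hfin.continuousOn f
  let f : ℝ → ℝ := fun x => if x = l then 1 else 0
  let g : ℝ → ℝ := fun x => if x = l then l⁻¹ else 0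
  refine ⟨cfc f h, cfc g h, l, ?_, ⟨?_, ?_⟩, ?_, ?_, ?_⟩
  -- the spectrum is finite, so the indicator function of `l` agrees on it with a polynomial
  · let P := Lagrange.interpolate hfin.toFinset id f
    have : cfc f h = Polynomial.aeval h P := by
      rw [← cfc_polynomial P h hs]
      apply cfc_congr
      intro x hx
      exact (Lagrange.eval_interpolate_at_node f (Set.injOn_id _)
        (hfin.mem_toFinset.2 hx)).symm
    rw [this, Polynomial.aeval_eq_sum_range]
    refine sum_mem fun i _ => ?_
    have := A.smul_mem (pow_mem hA i) ((P.coeff i : ℝ) : ℂ)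
    simpa using this
  · rw [IsIdempotentElem, ← cfc_mul f f h (hcont _) (hcont _)]
    congr 1; ext x; simp [f]
  · exact cfc_predicate f h
  -- by spectral mapping, `1 = f l` belongs to the spectrum of the projection
  · intro hz
    have : (1:ℝ) ∈ spectrum ℝ (cfc f h) := by
      rw [cfc_map_spectrum f h hs (hcont _)]
      exact ⟨l, hl, by simp [f]⟩
    rw [hz] at this
    rcases isEmpty_or_nonempty (Fin n) with hE | hE
    · exact h0 (Subsingleton.elim _ _)
    · simp [spectrum.zero_eq] at this
  · conv_rhs => enter [1]; rw [← cfc_id ℝ h hs]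
    rw [← cfc_mul _ _ h (hcont _) (hcont _)]
    congr 1; ext x; by_cases hx : x = l <;> simp [f, g, hx, hl0]
  · conv_lhs => enter [2]; rw [← cfc_id ℝ h hs]
    rw [← cfc_mul _ _ h (hcont _) (hcont _)]
    have : (l : ℂ) • cfc f h = l • cfc f h := by simp
    rw [this, ← cfc_smul l f h (hcont _)]
    congr 1; ext x; by_cases hx : x = l <;> simp [f, hx]

theorem IsMinProj.corner_sa {p h : Matrix (Fin n) (Fin n) ℂ} (hp : IsMinProj A p) (hA : h ∈ A)
    (hs : IsSelfAdjoint h) (hh : p * h = h) : ∃ c : ℂ, h = c • p := by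
  by_cases h0 : h = 0
  · exact ⟨0, by simp [h0]⟩
  obtain ⟨q, g, l, hqA, hq, hq0, h1, h2⟩ := exists_spectral_proj hA hs h0
  have := hp.2.2.2 q hqA hq hq0 (by rw [h1, ← mul_assoc, hh])
  subst this
  exact ⟨l, by rw [← h2, hh]⟩

/-- The corner `p A p` of a minimal projection consists of the scalar multiples of `p`. -/
theorem IsMinProj.corner {p a : Matrix (Fin n) (Fin n) ℂ} (hp : IsMinProj A p) (hA : a ∈ A) :
    ∃ c : ℂ, p * a * p = c • p := by
  have key : ∀ h ∈ A, IsSelfAdjoint h → ∃ c : ℂ, p * h * p = c • p := by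
    intro h hhA hs
    refine hp.corner_sa (mul_mem (mul_mem hp.1 hhA) hp.1) ?_ ?_
    · rw [IsSelfAdjoint, star_mul, star_mul, hs.star_eq, hp.2.1.isSelfAdjoint.star_eq, mul_assoc]
    · rw [← mul_assoc, ← mul_assoc, hp.2.1.isIdempotentElem.eq]
  obtain ⟨c, hc⟩ := key (a + star a) (add_mem hA (star_mem hA)) (IsSelfAdjoint.add_star_self a)
  obtain ⟨d, hd⟩ := key (Complex.I • (a - star a))
    (A.smul_mem (sub_mem hA (star_mem hA)) _) (by
      rw [IsSelfAdjoint, star_smul, star_sub, star_star]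
      simp [← smul_neg])
  refine ⟨(1/2) * c - (Complex.I / 2) * d, ?_⟩
  have e : a = (1/2 : ℂ) • (a + star a) - (Complex.I/2) • (Complex.I • (a - star a)) := by
    rw [smul_smul, div_mul_eq_mul_div, Complex.I_mul_I]
    module
  conv_lhs => rw [e]
  rw [mul_sub, sub_mul, mul_smul_comm, smul_mul_assoc, hc, mul_smul_comm, smul_mul_assoc, hd]
  module

/-- If `star u * u` is a projection `p`, then `u` is a partial isometry supported on the range of
`p`: expanding shows `star (u * p - u) * (u * p - u) = 0`. -/
theorem mul_of_star_mul_self {p u : Matrix (Fin n) (Fin n) ℂ} (hp : IsStarProjection p)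
    (h : star u * u = p) : u * p = u := by
  rw [← sub_eq_zero, ← conjTranspose_mul_self_eq_zero, ← star_eq_conjTranspose]
  simp only [star_sub, star_mul, hp.isSelfAdjoint.star_eq, sub_mul, mul_sub]
  have e1 : p * star u * (u * p) = p := by
    rw [mul_assoc, ← mul_assoc (star u), h, hp.isIdempotentElem.eq, hp.isIdempotentElem.eq]
  have e2 : p * star u * u = p := by rw [mul_assoc, h, hp.isIdempotentElem.eq]
  have e3 : star u * (u * p) = p := by rw [← mul_assoc, h, hp.isIdempotentElem.eq]
  rw [e1, e2, e3, h]; simp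

/-- If `p A q ≠ 0` for minimal projections `p` and `q`, then `A` contains a partial isometry with
initial projection `q` and final projection `p`: for `0 ≠ x ∈ p A q` one has `xᴴ x = c q` and
`x xᴴ = c p` with the same `c > 0`, and `x / √c` is the required element. -/
theorem IsMinProj.exists_partialIsometry {p q a : Matrix (Fin n) (Fin n) ℂ} (hp : IsMinProj A p)
    (hq : IsMinProj A q) (hA : a ∈ A) (h : p * a * q ≠ 0) :
    ∃ u ∈ A, star u * u = q ∧ u * star u = p := by
  set x := p * a * q with hx
  have hpp := hp.2.1.isIdempotentElem.eq
  have hqq := hq.2.1.isIdempotentElem.eq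
  have hps := hp.2.1.isSelfAdjoint.star_eq
  have hqs := hq.2.1.isSelfAdjoint.star_eq
  have hxA : x ∈ A := mul_mem (mul_mem hp.1 hA) hq.1
  have hpx : p * x = x := by rw [hx, ← mul_assoc, ← mul_assoc, hpp]
  have hxq : x * q = x := by rw [hx, mul_assoc, hqq]
  have hxp : star x * p = star x := by
    rw [← hps, ← star_mul, hpx]
  have hqx : q * star x = star x := by
    conv_lhs => rw [← hqs]
    rw [← star_mul, hxq]
  obtain ⟨c, hc⟩ := hq.corner (mul_mem (star_mem hxA) hxA)
  obtain ⟨c', hc'⟩ := hp.corner (mul_mem hxA (star_mem hxA))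
  rw [← mul_assoc, hqx, mul_assoc, hxq] at hc
  rw [← mul_assoc, hpx, mul_assoc, hxp] at hc'
  have hc0 : 0 < c := by
    have t1 : 0 ≤ (star x * x).trace := (Matrix.posSemidef_conjTranspose_mul_self x).trace_nonneg
    have t2 : 0 ≤ q.trace := by
      have := (Matrix.posSemidef_conjTranspose_mul_self q).trace_nonneg
      rwa [← star_eq_conjTranspose, hqs, hqq] at this
    have t3 : (star x * x).trace ≠ 0 := fun h0 =>
      h (Matrix.trace_conjTranspose_mul_self_eq_zero_iff.1 h0)
    have t4 : q.trace ≠ 0 := fun h0 => by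
      rw [hc, trace_smul, h0, smul_zero] at t3; exact t3 rfl
    rw [hc, trace_smul, smul_eq_mul] at t1 t3
    have t5 : 0 < q.trace := lt_of_le_of_ne t2 t4.symm
    have t6 : 0 < c * q.trace := lt_of_le_of_ne t1 t3.symm
    exact pos_of_mul_pos_left t6 t5.le
  have hcc : c' = c := by
    have e1 : x * star x * x = c • x := by rw [mul_assoc, hc, mul_smul_comm, hxq]
    have e2 : x * star x * x = c' • x := by rw [hc', smul_mul_assoc, hpx]
    exact smul_left_injective ℂ h (e2.symm.trans e1)
  subst hcc
  obtain ⟨r, hr0, rfl⟩ : ∃ r : ℝ, 0 < r ∧ (r : ℂ) = c' := by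
    rw [Complex.lt_def] at hc0
    exact ⟨c'.re, hc0.1, Complex.ext rfl hc0.2⟩
  have hs : ((√r : ℝ) : ℂ)⁻¹ * ((√r : ℝ) : ℂ)⁻¹ * (r : ℂ) = 1 := by
    have : (√r)⁻¹ * (√r)⁻¹ * r = 1 := by
      rw [← mul_inv, Real.mul_self_sqrt hr0.le, inv_mul_cancel₀ hr0.ne']
    exact_mod_cast this
  refine ⟨((√r : ℝ) : ℂ)⁻¹ • x, A.smul_mem hxA _, ?_, ?_⟩
  · rw [star_smul, smul_mul_smul_comm, hc, smul_smul]
    simp [hs]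
  · rw [star_smul, smul_mul_smul_comm, hc', smul_smul]
    simp [hs]

/-! ### Decomposition of the identity -/

/-- The columns of `W` are an orthonormal basis of the range of `p`, consisting of eigenvectors of
`p` with eigenvalue `1`. -/
theorem exists_isometry {p : Matrix (Fin n) (Fin n) ℂ} (hp : IsStarProjection p) :
    ∃ (e : ℕ) (W : Matrix (Fin n) (Fin e) ℂ), Wᴴ * W = 1 ∧ W * Wᴴ = p := by
  have hH : p.IsHermitian := hp.isSelfAdjoint
  set V : Matrix (Fin n) (Fin n) ℂ := (hH.eigenvectorUnitary).1 with hV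
  have hVV : Vᴴ * V = 1 := Unitary.coe_star_mul_self hH.eigenvectorUnitary
  set l := hH.eigenvalues with hl
  have hspec : p = V * diagonal (fun i => (l i : ℂ)) * Vᴴ := by
    conv_lhs => rw [hH.spectral_theorem]
    rfl
  have hl01 : ∀ i, l i = 0 ∨ l i = 1 := by
    have h1 : Vᴴ * p * V = diagonal (fun i => (l i : ℂ)) := by
      rw [hspec, mul_assoc, mul_assoc, hVV, mul_one, ← mul_assoc, hVV, one_mul]
    have h2 : diagonal (fun i => (l i : ℂ)) * diagonal (fun i => (l i : ℂ))
        = diagonal (fun i => (l i : ℂ)) := by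
      have h3 : (V * diagonal (fun i => (l i : ℂ)) * Vᴴ) * (V * diagonal (fun i => (l i : ℂ)) * Vᴴ)
          = V * (diagonal (fun i => (l i : ℂ)) * diagonal (fun i => (l i : ℂ))) * Vᴴ := by
        calc _ = V * diagonal (fun i => (l i : ℂ)) * (Vᴴ * V) *
                diagonal (fun i => (l i : ℂ)) * Vᴴ := by
              simp only [mul_assoc]
          _ = _ := by rw [hVV]; simp only [mul_assoc, one_mul]
      rw [← hspec, hp.isIdempotentElem.eq] at h3
      rw [h3, mul_assoc, mul_assoc, hVV, mul_one, ← mul_assoc, hVV, one_mul] at h1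
      exact h1
    intro i
    rw [diagonal_mul_diagonal] at h2
    have h4 := congrFun (congrFun h2 i) i
    simp only [diagonal_apply_eq] at h4
    have h5 : l i * l i = l i := by exact_mod_cast h4
    rcases eq_or_ne (l i) 0 with h | h
    · exact Or.inl h
    · exact Or.inr (mul_left_cancel₀ h (by rw [h5, mul_one]))
  let ε := Fintype.equivFin {i // l i = 1}
  refine ⟨_, V.submatrix id (fun x => (ε.symm x : Fin n)), ?_, ?_⟩
  · ext x y
    have := congrFun (congrFun hVV (ε.symm x)) (ε.symm y)
    simp only [mul_apply, conjTranspose_apply, submatrix_apply, id, one_apply] at this ⊢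
    rw [this]
    simp [Subtype.val_inj]
  · ext i j
    conv_rhs => rw [hspec]
    rw [mul_apply, mul_apply]
    simp only [conjTranspose_apply, submatrix_apply, id, mul_diagonal]
    rw [ε.symm.sum_comp (fun x : {i // l i = 1} => V i x * star (V j x))]
    rw [← Finset.sum_subtype (Finset.univ.filter fun x => l x = 1) (by simp)
      (fun x => V i x * star (V j x)), Finset.sum_filter]
    refine Finset.sum_congr rfl fun x _ => ?_
    rcases hl01 x with h | h <;> simp [h]

theorem IsStarProjection.eq_zero_of_trace {p : Matrix (Fin n) (Fin n) ℂ}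
    (hp : IsStarProjection p) (h : p.trace = 0) : p = 0 := by
  rw [← Matrix.trace_conjTranspose_mul_self_eq_zero_iff, ← star_eq_conjTranspose,
    hp.isSelfAdjoint.star_eq, hp.isIdempotentElem.eq, h]

/-- The trace of a projection is a natural number (its rank). -/
theorem IsStarProjection.exists_trace_eq {p : Matrix (Fin n) (Fin n) ℂ}
    (hp : IsStarProjection p) : ∃ r : ℕ, p.trace = r := by
  obtain ⟨e, W, h1, h2⟩ := exists_isometry hp
  exact ⟨e, by rw [← h2, trace_mul_comm, h1]; simp⟩

/-- Every projection of `A` is a sum of pairwise orthogonal minimal projections of `A`. The proof is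
by induction on a bound `m` for the trace: a projection `p` that is neither zero nor minimal splits
as `q + (p - q)` with both summands nonzero projections of `A`, hence of smaller trace. -/
theorem exists_minProj_decomp (m : ℕ) : ∀ p ∈ A, IsStarProjection p → (∃ r : ℕ, r ≤ m ∧ p.trace = r) →
    ∃ (ι : Type) (_ : Fintype ι) (P : ι → Matrix (Fin n) (Fin n) ℂ),
      (∀ i, IsMinProj A (P i)) ∧ (∀ i j, i ≠ j → P i * P j = 0) ∧ ∑ i, P i = p := by
  induction m with
  | zero =>
    rintro p _ hp ⟨r, hr, htr⟩
    have : p = 0 := hp.eq_zero_of_trace (by simpa [Nat.le_zero.1 hr] using htr)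
    exact ⟨Empty, inferInstance, fun i => i.elim, fun i => i.elim, fun i => i.elim, by simp [this]⟩
  | succ m ih =>
    rintro p hpA hp ⟨r, hr, htr⟩
    by_cases hp0 : p = 0
    · exact ⟨Empty, inferInstance, fun i => i.elim, fun i => i.elim, fun i => i.elim,
        by simp [hp0]⟩
    by_cases hmin : IsMinProj A p
    · exact ⟨Unit, inferInstance, fun _ => p, fun _ => hmin, fun i j h => (h rfl).elim, by simp⟩
    obtain ⟨q, hqA, hq, hq0, hpq, hne⟩ :
        ∃ q ∈ A, IsStarProjection q ∧ q ≠ 0 ∧ p * q = q ∧ q ≠ p := by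
      by_contra! hc
      exact hmin ⟨hpA, hp, hp0, hc⟩
    have hqp : q * p = q := by
      have := congrArg star hpq
      rwa [star_mul, hq.isSelfAdjoint.star_eq, hp.isSelfAdjoint.star_eq] at this
    have hpp := hp.isIdempotentElem.eq
    have hqq := hq.isIdempotentElem.eq
    have hr' : IsStarProjection (p - q) := by
      refine ⟨?_, hp.isSelfAdjoint.sub hq.isSelfAdjoint⟩
      simp [IsIdempotentElem, mul_sub, sub_mul, hpp, hqq, hpq, hqp]
    obtain ⟨a, ha⟩ := hq.exists_trace_eq
    obtain ⟨b, hb⟩ := hr'.exists_trace_eq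
    have hadd : r = a + b := by
      have : (r : ℂ) = a + b := by rw [← htr, ← ha, ← hb, trace_sub]; ring
      exact_mod_cast this
    have h1 : a ≠ 0 := by
      rintro rfl
      exact hq0 (hq.eq_zero_of_trace (by simpa using ha))
    have h2 : b ≠ 0 := by
      rintro rfl
      exact hne.symm (sub_eq_zero.1 (hr'.eq_zero_of_trace (by simpa using hb)))
    obtain ⟨ι, _, P, hP, hPo, hPs⟩ := ih q hqA hq ⟨a, by omega, ha⟩
    obtain ⟨κ, _, Q, hQ, hQo, hQs⟩ := ih (p - q) (sub_mem hpA hqA) hr' ⟨b, by omega, hb⟩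
    have hPq : ∀ i, P i * q = P i := by
      classical
      intro i
      rw [← hPs, Finset.mul_sum, Finset.sum_eq_single i]
      · exact (hP i).2.1.isIdempotentElem.eq
      · intro j _ hj; exact hPo _ _ hj.symm
      · simp
    have hQq : ∀ i, (p - q) * Q i = Q i := by
      classical
      intro i
      rw [← hQs, Finset.sum_mul, Finset.sum_eq_single i]
      · exact (hQ i).2.1.isIdempotentElem.eq
      · intro j _ hj; exact hQo _ _ hj
      · simp
    have hPQ : ∀ i j, P i * Q j = 0 := by
      intro i j
      rw [← hPq, ← hQq, mul_assoc, ← mul_assoc q, mul_sub, hqp, hqq, sub_self, zero_mul, mul_zero]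
    have hQP : ∀ i j, Q j * P i = 0 := by
      intro i j
      have := congrArg star (hPQ i j)
      rwa [star_mul, (hP i).2.1.isSelfAdjoint.star_eq, (hQ j).2.1.isSelfAdjoint.star_eq,
        star_zero] at this
    refine ⟨ι ⊕ κ, inferInstance, Sum.elim P Q, ?_, ?_, ?_⟩
    · rintro (i | j)
      exacts [hP i, hQ j]
    · rintro (i | i) (j | j) hij
      · exact hPo _ _ (fun h => hij (by rw [h]))
      · exact hPQ _ _
      · exact hQP _ _
      · exact hQo _ _ (fun h => hij (by rw [h]))
    · simp [hPs, hQs]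

end

/-! ### From a system of isometries to the block decomposition -/

/-- The structure theorem, given isometries `X i a : ℂ^(e i) → ℂⁿ` with pairwise orthogonal ranges
spanning `ℂⁿ`, for which the blocks of the elements of `A` have the required form and
which satisfy `X i a * (X i b)ᴴ ∈ A`. -/
theorem structure_of_isometries {n : ℕ} (hn : 1 ≤ n)
    (A : StarSubalgebra ℂ (Matrix (Fin n) (Fin n) ℂ)) (k : ℕ) (d e : Fin k → ℕ)
    (hd : ∀ i, 1 ≤ d i) (he : ∀ i, 1 ≤ e i)
    (X : ∀ i, Fin (d i) → Matrix (Fin n) (Fin (e i)) ℂ)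
    (hX1 : ∀ i a, (X i a)ᴴ * X i a = 1)
    (hXo : ∀ i a b, a ≠ b → (X i a)ᴴ * X i b = 0)
    (hXs : ∑ i, ∑ a, X i a * (X i a)ᴴ = 1)
    (hA0 : ∀ N ∈ A, ∀ i j, i ≠ j → ∀ a b, (X i a)ᴴ * N * X j b = 0)
    (hA1 : ∀ N ∈ A, ∀ i a b, ∃ c : ℂ, (X i a)ᴴ * N * X i b = c • 1)
    (hXA : ∀ i a b, X i a * (X i b)ᴴ ∈ A) :
    ∃ (k : ℕ), 1 ≤ k ∧
      ∃ (d e : Fin k → ℕ), (∀ i, 1 ≤ d i) ∧ (∀ i, 1 ≤ e i) ∧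
        ∃ (σ : Fin n ≃ (Σ i : Fin k, Fin (d i) × Fin (e i)))
          (U : Matrix (Fin n) (Fin n) ℂ),
          U * Uᴴ = 1 ∧ Uᴴ * U = 1 ∧
          (A : Set (Matrix (Fin n) (Fin n) ℂ)) =
            { N | ∃ (M : Matrix (Fin n) (Fin n) ℂ)
                    (B : ∀ i : Fin k, Matrix (Fin (d i)) (Fin (d i)) ℂ),
                (∀ x y : Fin n, (σ x).1 ≠ (σ y).1 → M x y = 0) ∧
                (∀ (i : Fin k) (a b : Fin (d i)) (x y : Fin (e i)),
                  M (σ.symm ⟨i, (a, x)⟩) (σ.symm ⟨i, (b, y)⟩) =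
                    if x = y then B i a b else 0) ∧
                N = U * M * Uᴴ } := by
  -- `Y` collects the columns of all the `X i a`; it is unitary up to the choice of `σ`
  let Y : Matrix (Fin n) (Σ i : Fin k, Fin (d i) × Fin (e i)) ℂ :=
    Matrix.of fun r s => X s.1 s.2.1 r s.2.2
  have hYN : ∀ (N : Matrix (Fin n) (Fin n) ℂ) s t, (Yᴴ * N * Y) s t = ((X s.1 s.2.1)ᴴ * N * X t.1 t.2.1) s.2.2 t.2.2 := by
    intro N s t
    simp only [mul_apply, conjTranspose_apply]
    rfl
  have hY1 : Yᴴ * Y = 1 := by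
    ext ⟨i, a, x⟩ ⟨j, b, y⟩
    have := hYN 1 ⟨i, a, x⟩ ⟨j, b, y⟩
    rw [Matrix.mul_one] at this
    rw [this]
    by_cases hij : i = j
    · subst hij
      by_cases hab : a = b
      · subst hab
        simp [hX1, one_apply]
      · simp [hXo i a b hab, hab, one_apply]
    -- orthogonality across different `i` is the vanishing of the blocks of `1 ∈ A`
    · rw [hA0 1 (one_mem A) i j hij a b, one_apply_ne (by simp [hij]), Matrix.zero_apply]
  have hY2 : Y * Yᴴ = 1 := by
    rw [← hXs]
    ext r s
    simp only [mul_apply, conjTranspose_apply, Matrix.sum_apply, Fintype.sum_sigma, Fintype.sum_prod_type]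
    rfl
  -- comparing the traces of `Y * Yᴴ = 1` and `Yᴴ * Y = 1`
  have hcard : Fintype.card (Fin n) = Fintype.card (Σ i : Fin k, Fin (d i) × Fin (e i)) := by
    have h := trace_mul_comm Y Yᴴ
    rw [hY1, hY2, trace_one, trace_one] at h
    exact_mod_cast h
  let σ : Fin n ≃ (Σ i : Fin k, Fin (d i) × Fin (e i)) := Fintype.equivOfCardEq hcard
  have hk : 1 ≤ k := (Nat.zero_le _).trans_lt (σ ⟨0, hn⟩).1.2
  let U : Matrix (Fin n) (Fin n) ℂ := Y.submatrix id σ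
  have hU2 : U * Uᴴ = 1 := by
    rw [conjTranspose_submatrix, submatrix_mul_equiv, hY2, submatrix_id_id]
  have hU1 : Uᴴ * U = 1 := by
    have : Uᴴ * U = (Yᴴ * Y).submatrix σ σ := by
      ext; rfl
    rw [this, hY1, submatrix_one_equiv]
  have hUN : ∀ (N : Matrix (Fin n) (Fin n) ℂ) x y, (Uᴴ * N * U) x y = (Yᴴ * N * Y) (σ x) (σ y) := fun N x y => rfl
  refine ⟨k, hk, d, e, hd, he, σ, U, hU2, hU1, ?_⟩
  ext N
  simp only [SetLike.mem_coe, Set.mem_ofPred_eq]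
  constructor
  · intro hN
    choose c hc using hA1 N hN
    refine ⟨Uᴴ * N * U, fun i => Matrix.of (c i), ?_, ?_, ?_⟩
    · intro x y hxy
      rw [hUN, hYN, hA0 N hN _ _ hxy, Matrix.zero_apply]
    · intro i a b x y
      rw [hUN, Equiv.apply_symm_apply, Equiv.apply_symm_apply, hYN]
      simp [hc, one_apply]
    · calc N = (U * Uᴴ) * N * (U * Uᴴ) := by rw [hU2, one_mul, mul_one]
        _ = _ := by simp only [mul_assoc]
  · rintro ⟨M, B, h0, h1, rfl⟩
    have : U * M * Uᴴ = ∑ i, ∑ a, ∑ b, B i a b • (X i a * (X i b)ᴴ) := by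
      have hM0 : ∀ s t, s.1 ≠ t.1 → M (σ.symm s) (σ.symm t) = 0 := fun s t hst =>
        h0 _ _ (by simpa using hst)
      have : U * M * Uᴴ = Y * M.submatrix σ.symm σ.symm * Yᴴ := by
        have : Y = U.submatrix id σ.symm := by ext; simp [U]
        rw [this, submatrix_mul_equiv, conjTranspose_submatrix U id σ.symm, submatrix_mul_equiv,
          submatrix_id_id]
      rw [this, Matrix.mul_assoc]
      ext r s
      simp only [mul_apply, Matrix.sum_apply, Matrix.smul_apply, submatrix_apply, conjTranspose_apply,
        Fintype.sum_sigma, Fintype.sum_prod_type]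
      refine Finset.sum_congr rfl fun i _ => Finset.sum_congr rfl fun a _ => ?_
      have inner : ∀ x, ∑ j, ∑ b, ∑ y, M (σ.symm ⟨i, a, x⟩) (σ.symm ⟨j, b, y⟩) *
          star (Y s ⟨j, b, y⟩) = ∑ b, B i a b * star (X i b s x) := by
        intro x
        rw [Finset.sum_eq_single i]
        · simp [h1, Y]
        · intro j _ hj
          simp [hM0 ⟨i, _⟩ ⟨j, _⟩ hj.symm]
        · simp
      simp only [inner, Finset.mul_sum, Finset.smul_sum]
      rw [Finset.sum_comm]
      refine Finset.sum_congr rfl fun b _ => Finset.sum_congr rfl fun x _ => ?_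
      simp only [Y, of_apply, smul_eq_mul]
      ring
    rw [this]
    exact sum_mem fun i _ => sum_mem fun a _ => sum_mem fun b _ => A.smul_mem (hXA i a b) _

/-! ### The structure lemma -/

/-- The Structure Lemma for finite-dimensional C*-algebras: every unital star-subalgebra
of the `n × n` complex matrices is, after conjugation by a single unitary `U` and a
relabeling `σ` of the index set, a direct sum of blocks of the form `B ⊗ I`. -/
theorem structure_lemma (n : ℕ) (hn : 1 ≤ n)
    (A : StarSubalgebra ℂ (Matrix (Fin n) (Fin n) ℂ)) :
    ∃ (k : ℕ), 1 ≤ k ∧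
      ∃ (d e : Fin k → ℕ), (∀ i, 1 ≤ d i) ∧ (∀ i, 1 ≤ e i) ∧
        ∃ (σ : Fin n ≃ (Σ i : Fin k, Fin (d i) × Fin (e i)))
          (U : Matrix (Fin n) (Fin n) ℂ),
          U * Uᴴ = 1 ∧ Uᴴ * U = 1 ∧
          (A : Set (Matrix (Fin n) (Fin n) ℂ)) =
            { N | ∃ (M : Matrix (Fin n) (Fin n) ℂ)
                    (B : ∀ i : Fin k, Matrix (Fin (d i)) (Fin (d i)) ℂ),
                (∀ x y : Fin n, (σ x).1 ≠ (σ y).1 → M x y = 0) ∧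
                (∀ (i : Fin k) (a b : Fin (d i)) (x y : Fin (e i)),
                  M (σ.symm ⟨i, (a, x)⟩) (σ.symm ⟨i, (b, y)⟩) =
                    if x = y then B i a b else 0) ∧
                N = U * M * Uᴴ } := by
  classical
  obtain ⟨ι, _, P, hP, hPo, hPs⟩ := exists_minProj_decomp (A := A) n 1 (one_mem A)
    (IsStarProjection.one _) ⟨n, le_rfl, by simp⟩
  have hPP : ∀ s, P s * P s = P s := fun s => (hP s).2.1.isIdempotentElem.eq
  -- equivalence of minimal projections in the sense of Murray and von Neumann
  let S : Setoid ι :=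
    { r := fun s t => ∃ u ∈ A, star u * u = P s ∧ u * star u = P t
      iseqv := by
        refine ⟨fun s => ⟨P s, (hP s).1, ?_, ?_⟩, ?_, ?_⟩
        · rw [(hP s).2.1.isSelfAdjoint.star_eq, hPP]
        · rw [(hP s).2.1.isSelfAdjoint.star_eq, hPP]
        · rintro s t ⟨u, hu, h1, h2⟩
          exact ⟨star u, star_mem hu, by rwa [star_star], by rwa [star_star]⟩
        · rintro s t r ⟨u, hu, h1, h2⟩ ⟨v, hv, h3, h4⟩
          refine ⟨v * u, mul_mem hv hu, ?_, ?_⟩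
          · calc star (v * u) * (v * u) = star u * (star v * v) * u := by
                  simp only [star_mul, mul_assoc]
              _ = (star u * u) * (star u * u) := by rw [h3, ← h2]; simp only [mul_assoc]
              _ = P s := by rw [h1, hPP]
          · calc v * u * star (v * u) = v * (u * star u) * star v := by
                  simp only [star_mul, mul_assoc]
              _ = (v * star v) * (v * star v) := by rw [h2, ← h3]; simp only [mul_assoc]
              _ = P r := by rw [h4, hPP] }
  let ε : Quotient S ≃ Fin (Fintype.card (Quotient S)) := Fintype.equivFin _
  -- `cl s` is the class of `s`, and `rep i` a representative of the class `i`
  let cl : ι → Fin (Fintype.card (Quotient S)) := fun s => ε (Quotient.mk S s)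
  let rep : Fin (Fintype.card (Quotient S)) → ι := fun i => (ε.symm i).out
  have hrep : ∀ i, cl (rep i) = i := fun i => by simp [cl, rep]
  have hcl : ∀ s t, cl s = cl t ↔ S.r s t := fun s t => by
    simp only [cl, EmbeddingLike.apply_eq_iff_eq]
    exact Quotient.eq
  have hv : ∀ i (s : {s // cl s = i}), ∃ u ∈ A, star u * u = P (rep i) ∧ u * star u = P s :=
    fun i s => (hcl _ _).1 ((hrep i).trans s.2.symm)
  choose v hvA hv1 hv2 using hv
  have hv3 : ∀ i s, v i s * P (rep i) = v i s := fun i s =>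
    mul_of_star_mul_self (hP _).2.1 (hv1 i s)
  have hv4 : ∀ i (s : {s // cl s = i}), P s * v i s = v i s := fun i s => by
    rw [← hv2, mul_assoc, hv1, hv3]
  have hv5 : ∀ i s, (v i s)ᴴ * P s = (v i s)ᴴ := fun i s => by
    have := congrArg star (hv4 i s)
    rwa [star_mul, (hP _).2.1.isSelfAdjoint.star_eq] at this
  have hv6 : ∀ i s, P (rep i) * (v i s)ᴴ = (v i s)ᴴ := fun i s => by
    have := congrArg star (hv3 i s)
    rwa [star_mul, (hP _).2.1.isSelfAdjoint.star_eq] at this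
  choose e W hW1 hW2 using fun i => exists_isometry (hP (rep i)).2.1
  let δ : ∀ i, {s // cl s = i} ≃ Fin (Fintype.card {s // cl s = i}) := fun i => Fintype.equivFin _
  have hmul : ∀ i s t, v i s * W i * (v i t * W i)ᴴ = v i s * (v i t)ᴴ := fun i s t => by
    calc _ = v i s * (W i * (W i)ᴴ) * (v i t)ᴴ := by
          simp only [conjTranspose_mul, Matrix.mul_assoc]
      _ = _ := by rw [hW2, hv3]
  have hadj : ∀ i s j t (N : Matrix (Fin n) (Fin n) ℂ), (v i s * W i)ᴴ * N * (v j t * W j) =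
      (W i)ᴴ * ((v i s)ᴴ * (P s * N * P t) * v j t) * W j := fun i s j t N => by
    calc _ = (W i)ᴴ * ((v i s)ᴴ * N * v j t) * W j := by
          simp only [conjTranspose_mul, Matrix.mul_assoc]
      _ = (W i)ᴴ * (((v i s)ᴴ * P s) * N * (P t * v j t)) * W j := by rw [hv5, hv4]
      _ = _ := by simp only [Matrix.mul_assoc]
  refine structure_of_isometries hn A (Fintype.card (Quotient S))
    (fun i => Fintype.card {s // cl s = i}) e ?_ ?_
    (fun i a => v i ((δ i).symm a) * W i) ?_ ?_ ?_ ?_ ?_ ?_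
  · intro i
    exact Fintype.card_pos_iff.2 ⟨⟨rep i, hrep i⟩⟩
  · intro i
    rw [Nat.one_le_iff_ne_zero]
    intro h0
    have : IsEmpty (Fin (e i)) := by rw [h0]; infer_instance
    apply (hP (rep i)).2.2.1
    rw [← hW2]
    ext x y
    simp [mul_apply]
  · intro i a
    calc _ = (W i)ᴴ * (star (v i ((δ i).symm a)) * v i ((δ i).symm a)) * W i := by
          simp only [conjTranspose_mul, Matrix.mul_assoc, star_eq_conjTranspose]
      _ = ((W i)ᴴ * W i) * ((W i)ᴴ * W i) := by
          rw [hv1, ← hW2]; simp only [Matrix.mul_assoc]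
      _ = 1 := by rw [hW1, one_mul]
  · intro i a b hab
    have := hadj i ((δ i).symm a) i ((δ i).symm b) 1
    rw [Matrix.mul_one, mul_one, hPo] at this
    · rw [this]; simp
    · intro h
      exact hab ((δ i).symm.injective (Subtype.ext h))
  · simp only [hmul]
    rw [← hPs, ← (Equiv.sigmaFiberEquiv cl).sum_comp P, Fintype.sum_sigma]
    refine Finset.sum_congr rfl fun i _ => ?_
    rw [(δ i).symm.sum_comp (fun s => v i s * (v i s)ᴴ)]
    exact Finset.sum_congr rfl fun s _ => hv2 i s
  · intro N hN i j hij a b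
    rw [hadj]
    have : P ((δ i).symm a) * N * P ((δ j).symm b) = 0 := by
      by_contra h
      have h2 := (hcl _ _).2 ((hP _).exists_partialIsometry (hP _) hN h)
      rw [((δ i).symm a).2, ((δ j).symm b).2] at h2
      exact hij h2.symm
    rw [this]; simp
  · intro N hN i a b
    obtain ⟨c, hc⟩ := (hP (rep i)).corner
      (mul_mem (mul_mem (star_mem (hvA i ((δ i).symm a))) hN) (hvA i ((δ i).symm b)))
    refine ⟨c, ?_⟩
    calc _ = (W i)ᴴ * ((v i ((δ i).symm a))ᴴ * N * v i ((δ i).symm b)) * W i := by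
          simp only [conjTranspose_mul, Matrix.mul_assoc]
      _ = (W i)ᴴ * (c • P (rep i)) * W i := by
          rw [← hc, star_eq_conjTranspose, ← mul_assoc, ← mul_assoc, hv6, mul_assoc _ _ (P (rep i)),
            hv3]
      _ = c • (((W i)ᴴ * W i) * ((W i)ᴴ * W i)) := by
          rw [← hW2, Matrix.mul_smul, Matrix.smul_mul]; simp only [Matrix.mul_assoc]
      _ = c • 1 := by rw [hW1, one_mul]
  · intro i a b
    rw [hmul]
    exact mul_mem (hvA _ _) (star_mem (hvA _ _))
end

section
/- Let n ≥ 1, let k ≥ 1, let d₁,…,d_k and e₁,…,e_k be positive integers, let σ : Fin n ≃ Σ i, (Fin dᵢ × Fin eᵢ) be a bijection, let U be an n×n unitary matrix, and let A = { U · M · Uᴴ : M[(i,a,x),(j,b,y)] = 0 unless i = j and x = y, and M[(i,a,x),(i,b,x)] = Bᵢ[a,b] for some family Bᵢ ∈ Matrix (Fin dᵢ) (Fin dᵢ) ℂ } (entries indexed through σ). Then an n×n complex matrix N satisfies N·X = X·N for every X ∈ A if and only if N = U · M' · Uᴴ, where M'[(i,a,x),(j,b,y)] = 0 unless i = j and a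 = b, and M'[(i,a,x),(i,a,y)] = Cᵢ[x,y] for some family Cᵢ ∈ Matrix (Fin eᵢ) (Fin eᵢ) ℂ. -/
/-!
Conjugating by the unitary `U` and reindexing along `σ` turns the claim into one about block
diagonal matrices indexed by `Σ i, Fin (d i) × Fin (e i)`: the commutant of the matrices
`⊕ᵢ Bᵢ ⊗ 1` consists of the matrices `⊕ᵢ 1 ⊗ Cᵢ`. One inclusion is the mixed-product rule for
Kronecker products. For the other, let `P` commute with the matrix `E` whose only nonzero block is
`e_{ac} ⊗ 1`, in position `i`; comparing the entries of `E * P` and `P * E` at row `(i, a, x)` and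
column `(j, b, y)` gives `P (i, c, x) (j, b, y) = P (i, a, x) (i, a, y)` if `j = i` and `b = c`,
and `0` otherwise (`entry_of_commute`). Fixing `a = 0` reads off `Cᵢ`.
-/

open Matrix
open scoped Kronecker

namespace StructureCommutant

variable {k : ℕ} {d e : Fin k → ℕ}

/-- The matrix `⊕ᵢ Bᵢ ⊗ 1`. -/
noncomputable def leftBlocks (e : Fin k → ℕ) (B : ∀ i, Matrix (Fin (d i)) (Fin (d i)) ℂ) :
    Matrix (Σ i, Fin (d i) × Fin (e i)) (Σ i, Fin (d i) × Fin (e i)) ℂ :=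
  blockDiagonal' fun i => B i ⊗ₖ (1 : Matrix (Fin (e i)) (Fin (e i)) ℂ)

/-- The matrix `⊕ᵢ 1 ⊗ Cᵢ`. -/
noncomputable def rightBlocks (d : Fin k → ℕ) (C : ∀ i, Matrix (Fin (e i)) (Fin (e i)) ℂ) :
    Matrix (Σ i, Fin (d i) × Fin (e i)) (Σ i, Fin (d i) × Fin (e i)) ℂ :=
  blockDiagonal' fun i => (1 : Matrix (Fin (d i)) (Fin (d i)) ℂ) ⊗ₖ C i

lemma rightBlocks_mul_leftBlocks (B : ∀ i, Matrix (Fin (d i)) (Fin (d i)) ℂ)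
    (C : ∀ i, Matrix (Fin (e i)) (Fin (e i)) ℂ) :
    rightBlocks d C * leftBlocks e B = leftBlocks e B * rightBlocks d C := by
  simp only [leftBlocks, rightBlocks, ← blockDiagonal'_mul, ← mul_kronecker_mul,
    Matrix.one_mul, Matrix.mul_one]

/-- The matrix with single nonzero block `e_{ac} ⊗ 1` in position `i`, as a sum of matrix units. -/
lemma leftBlocks_single (i : Fin k) (a c : Fin (d i)) :
    leftBlocks e (Pi.single i (Matrix.single a c (1 : ℂ))) =
      ∑ z : Fin (e i), Matrix.single (⟨i, (a, z)⟩ : Σ i, Fin (d i) × Fin (e i)) ⟨i, (c, z)⟩ 1 := by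
  ext ⟨j, b, x⟩ ⟨l, b', y⟩
  rw [Matrix.sum_apply]
  by_cases hj : i = j
  · subst hj
    by_cases hl : i = l
    · subst hl
      by_cases hb : a = b <;> by_cases hcb : c = b' <;> by_cases hx : x = y <;>
        simp [leftBlocks, blockDiagonal'_apply, kroneckerMap_apply, Matrix.single_apply,
          hb, hcb, hx]
      -- the entry off the diagonal of the second factor: no `z` equals both `x` and `y`
      rw [Finset.filter_false_of_mem fun z _ hz => hx (hz.1.symm.trans hz.2)]
      simp
    · simp [leftBlocks, blockDiagonal'_apply, hl]
  · simp [leftBlocks, blockDiagonal'_apply, hj]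

/-- Commutation with `e_{ac} ⊗ 1` in position `i`, read at row `(i, a, x)`. The sum over `z` has at
most one nonzero term; writing it as a sum avoids transporting `y` along an equality `j = i`. -/
lemma entry_of_commute (P : Matrix (Σ i, Fin (d i) × Fin (e i)) (Σ i, Fin (d i) × Fin (e i)) ℂ)
    (hP : ∀ B, P * leftBlocks e B = leftBlocks e B * P)
    (i : Fin k) (a c : Fin (d i)) (x : Fin (e i)) (j : Fin k) (b : Fin (d j)) (y : Fin (e j)) :
    P ⟨i, (c, x)⟩ ⟨j, (b, y)⟩ =
      ∑ z : Fin (e i), if (⟨i, (c, z)⟩ : Σ i, Fin (d i) × Fin (e i)) = ⟨j, (b, y)⟩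
        then P ⟨i, (a, x)⟩ ⟨i, (a, z)⟩ else 0 := by
  have h := congrFun (congrFun (hP (Pi.single i (Matrix.single a c 1))) ⟨i, (a, x)⟩) ⟨j, (b, y)⟩
  rw [leftBlocks_single, Finset.mul_sum, Finset.sum_mul, Matrix.sum_apply, Matrix.sum_apply] at h
  simp only [Matrix.mul_apply, Matrix.single_apply, ite_and, ite_mul, mul_ite, mul_one, mul_zero,
    one_mul, zero_mul, Finset.sum_ite_eq, Finset.mem_univ, if_true] at h
  simpa [eq_comm, ite_and] using h.symm

lemma eq_rightBlocks_of_commute (hd : ∀ i, 1 ≤ d i)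
    (P : Matrix (Σ i, Fin (d i) × Fin (e i)) (Σ i, Fin (d i) × Fin (e i)) ℂ)
    (hP : ∀ B, P * leftBlocks e B = leftBlocks e B * P) :
    P = rightBlocks d fun i => Matrix.of fun x y => P ⟨i, (⟨0, hd i⟩, x)⟩ ⟨i, (⟨0, hd i⟩, y)⟩ := by
  ext ⟨i, c, x⟩ ⟨j, b, y⟩
  rw [entry_of_commute P hP i ⟨0, hd i⟩ c x j b y]
  by_cases hj : i = j
  · subst hj
    by_cases hb : c = b <;>
      simp [rightBlocks, blockDiagonal'_apply, kroneckerMap_apply, hb]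
  · simp [rightBlocks, blockDiagonal'_apply, hj]

/-- The entrywise description of a block diagonal matrix, with indices read through `σ`. -/
lemma eq_submatrix_blockDiagonal'_iff {n : ℕ} (σ : Fin n ≃ (Σ i : Fin k, Fin (d i) × Fin (e i)))
    (M : Matrix (Fin n) (Fin n) ℂ)
    (D : ∀ i, Matrix (Fin (d i) × Fin (e i)) (Fin (d i) × Fin (e i)) ℂ) :
    M = (blockDiagonal' D).submatrix σ σ ↔
      (∀ x y : Fin n, (σ x).1 ≠ (σ y).1 → M x y = 0) ∧
      ∀ (i : Fin k) (a b : Fin (d i)) (x y : Fin (e i)),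
        M (σ.symm ⟨i, (a, x)⟩) (σ.symm ⟨i, (b, y)⟩) = D i (a, x) (b, y) := by
  constructor
  · rintro rfl
    refine ⟨fun x y h => ?_, fun i a b x y => ?_⟩
    · simp [blockDiagonal'_apply, h]
    · simp [blockDiagonal'_apply]
  · rintro ⟨h0, h1⟩
    ext x y
    obtain ⟨⟨i, a, x⟩, rfl⟩ := σ.symm.surjective x
    obtain ⟨⟨j, b, y⟩, rfl⟩ := σ.symm.surjective y
    by_cases hj : i = j
    · subst hj
      simp [h1, blockDiagonal'_apply]
    · rw [h0 _ _ (by simpa using hj)]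
      simp [blockDiagonal'_apply, hj]

lemma eq_submatrix_leftBlocks_iff {n : ℕ} (σ : Fin n ≃ (Σ i : Fin k, Fin (d i) × Fin (e i)))
    (M : Matrix (Fin n) (Fin n) ℂ) (B : ∀ i, Matrix (Fin (d i)) (Fin (d i)) ℂ) :
    M = (leftBlocks e B).submatrix σ σ ↔
      (∀ x y : Fin n, (σ x).1 ≠ (σ y).1 → M x y = 0) ∧
      ∀ (i : Fin k) (a b : Fin (d i)) (x y : Fin (e i)),
        M (σ.symm ⟨i, (a, x)⟩) (σ.symm ⟨i, (b, y)⟩) = if x = y then B i a b else 0 := by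
  simp [leftBlocks, eq_submatrix_blockDiagonal'_iff, kroneckerMap_apply, Matrix.one_apply]

lemma eq_submatrix_rightBlocks_iff {n : ℕ} (σ : Fin n ≃ (Σ i : Fin k, Fin (d i) × Fin (e i)))
    (M : Matrix (Fin n) (Fin n) ℂ) (C : ∀ i, Matrix (Fin (e i)) (Fin (e i)) ℂ) :
    M = (rightBlocks d C).submatrix σ σ ↔
      (∀ x y : Fin n, (σ x).1 ≠ (σ y).1 → M x y = 0) ∧
      ∀ (i : Fin k) (a b : Fin (d i)) (x y : Fin (e i)),
        M (σ.symm ⟨i, (a, x)⟩) (σ.symm ⟨i, (b, y)⟩) = if a = b then C i x y else 0 := by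
  simp [rightBlocks, eq_submatrix_blockDiagonal'_iff, kroneckerMap_apply, Matrix.one_apply]

end StructureCommutant

open StructureCommutant in
/-- Commutant form of the Structure Lemma: a matrix commutes with every element of the
block-decomposed algebra `A = U · (⊕ᵢ Mat(dᵢ) ⊗ I(eᵢ)) · Uᴴ` iff it belongs to
`U · (⊕ᵢ I(dᵢ) ⊗ Mat(eᵢ)) · Uᴴ`. -/
theorem structure_lemma_commutant (n : ℕ) (hn : 1 ≤ n) (k : ℕ) (hk : 1 ≤ k)
    (d e : Fin k → ℕ) (hd : ∀ i, 1 ≤ d i) (he : ∀ i, 1 ≤ e i)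
    (σ : Fin n ≃ (Σ i : Fin k, Fin (d i) × Fin (e i)))
    (U : Matrix (Fin n) (Fin n) ℂ)
    (hU : U * Uᴴ = 1) (hU' : Uᴴ * U = 1)
    (A : Set (Matrix (Fin n) (Fin n) ℂ))
    (hA : A = { N | ∃ (M : Matrix (Fin n) (Fin n) ℂ)
                      (B : ∀ i : Fin k, Matrix (Fin (d i)) (Fin (d i)) ℂ),
            (∀ x y : Fin n, (σ x).1 ≠ (σ y).1 → M x y = 0) ∧
            (∀ (i : Fin k) (a b : Fin (d i)) (x y : Fin (e i)),
              M (σ.symm ⟨i, (a, x)⟩) (σ.symm ⟨i, (b, y)⟩) =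
                if x = y then B i a b else 0) ∧
            N = U * M * Uᴴ })
    (N : Matrix (Fin n) (Fin n) ℂ) :
    (∀ X ∈ A, N * X = X * N) ↔
      ∃ (M' : Matrix (Fin n) (Fin n) ℂ)
        (C : ∀ i : Fin k, Matrix (Fin (e i)) (Fin (e i)) ℂ),
        (∀ x y : Fin n, (σ x).1 ≠ (σ y).1 → M' x y = 0) ∧
        (∀ (i : Fin k) (a b : Fin (d i)) (x y : Fin (e i)),
          M' (σ.symm ⟨i, (a, x)⟩) (σ.symm ⟨i, (b, y)⟩) =
            if a = b then C i x y else 0) ∧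
        N = U * M' * Uᴴ := by
  subst hA
  have conj_mul : ∀ X Y : Matrix (Fin n) (Fin n) ℂ,
      (U * X * Uᴴ) * (U * Y * Uᴴ) = U * (X * Y) * Uᴴ := fun X Y => by
    calc (U * X * Uᴴ) * (U * Y * Uᴴ) = U * X * (Uᴴ * U) * Y * Uᴴ := by
          simp only [Matrix.mul_assoc]
      _ = U * (X * Y) * Uᴴ := by rw [hU']; simp only [Matrix.mul_assoc, Matrix.one_mul]
  have conj_inv : ∀ X : Matrix (Fin n) (Fin n) ℂ, Uᴴ * (U * X * Uᴴ) * U = X := fun X => by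
    calc Uᴴ * (U * X * Uᴴ) * U = (Uᴴ * U) * X * (Uᴴ * U) := by simp only [Matrix.mul_assoc]
      _ = X := by rw [hU', Matrix.one_mul, Matrix.mul_one]
  have hN : N = U * (Uᴴ * N * U) * Uᴴ := by
    calc N = (U * Uᴴ) * N * (U * Uᴴ) := by rw [hU, Matrix.one_mul, Matrix.mul_one]
      _ = U * (Uᴴ * N * U) * Uᴴ := by simp only [Matrix.mul_assoc]
  constructor
  · intro h
    set Q := Uᴴ * N * U with hQ
    have hcomm : ∀ B, Q.submatrix σ.symm σ.symm * leftBlocks e B =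
        leftBlocks e B * Q.submatrix σ.symm σ.symm := fun B => by
      have hM := (eq_submatrix_leftBlocks_iff σ ((leftBlocks e B).submatrix σ σ) B).1 rfl
      have h1 := h _ ⟨_, B, hM.1, hM.2, rfl⟩
      rw [hN, conj_mul, conj_mul] at h1
      have h2 := congrArg (fun X => Uᴴ * X * U) h1
      simp only [conj_inv] at h2
      have h3 := congrArg (fun X => X.submatrix σ.symm σ.symm) h2
      simpa [← submatrix_mul_equiv _ _ _ σ.symm] using h3
    have hP := eq_rightBlocks_of_commute hd _ hcomm
    have hM := (eq_submatrix_rightBlocks_iff σ Q _).1 (by rw [← hP]; simp)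
    exact ⟨Q, _, hM.1, hM.2, hN⟩
  · rintro ⟨M', C, h0, h1, rfl⟩ X ⟨M, B, h2, h3, rfl⟩
    rw [conj_mul, conj_mul, (eq_submatrix_rightBlocks_iff σ M' C).2 ⟨h0, h1⟩,
      (eq_submatrix_leftBlocks_iff σ M B).2 ⟨h2, h3⟩, submatrix_mul_equiv, submatrix_mul_equiv,
      rightBlocks_mul_leftBlocks]
end

section
/- Let a, b ≥ 1 and let h be an (a·b)×(a·b) complex matrix, viewed with row and column indices in Fin a × Fin b, with hᴴ = h. Suppose h = Σ_{i ∈ I} hᵢ ⊗ₖ gᵢ = Σ_{j ∈ J} ĥ_j ⊗ₖ ĝ_j are two finite decompositions, where hᵢ, ĥ_j are a×a matrices, gᵢ, ĝ_j are b×b matrices, ⊗ₖ is the Kronecker product, the family (gᵢ)_{i∈I} is linearly independent in the ℂ-vector space of b×b matrices, and the family (ĝ_j)_{j∈J} is linearly independent. Then the unital star-subalgebra of Matrix (Fin a) (Fin a) ℂ generated by {hᵢ : i ∈ I} equals the unital star-subalgebra generated by {ĥ_j : j ∈ J}. -/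
open Matrix Kronecker

/-!
Linear independence of the `g₁ i` gives, for each `i`, a linear functional `φ` on `b × b` matrices
with `φ (g₁ k) = δ_{ik}`. Slicing `h` by `φ`, i.e. applying `id ⊗ φ`, turns the first decomposition
into `h₁ i` and the second into `∑ j, φ (g₂ j) • h₂ j`. So every `h₁ i` lies in the linear span of
the `h₂ j`, and by symmetry the two families have the same span, hence generate the same algebra.
-/

/-- The slice map `id ⊗ φ` is well defined: it depends only on the sum `∑ i, x i ⊗ₖ g i`. -/
lemma slice_eq_of_kronecker_sum_eq {a b : ℕ} {ι κ : Type} [Fintype ι] [Fintype κ]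
    {x : ι → Matrix (Fin a) (Fin a) ℂ} {g : ι → Matrix (Fin b) (Fin b) ℂ}
    {y : κ → Matrix (Fin a) (Fin a) ℂ} {k : κ → Matrix (Fin b) (Fin b) ℂ}
    (heq : ∑ i, x i ⊗ₖ g i = ∑ j, y j ⊗ₖ k j) (φ : Matrix (Fin b) (Fin b) ℂ →ₗ[ℂ] ℂ) :
    ∑ i, φ (g i) • x i = ∑ j, φ (k j) • y j := by
  ext p r
  -- Equality of the `(p, r)` blocks of the two Kronecker sums.
  have hblock : ∑ i, x i p r • g i = ∑ j, y j p r • k j := by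
    ext q s
    simpa [Matrix.sum_apply] using congrFun (congrFun heq (p, q)) (r, s)
  simpa [Matrix.sum_apply, mul_comm] using congrArg φ hblock

lemma mem_span_range_of_kronecker_sum_eq {a b : ℕ} {ι κ : Type} [Fintype ι] [Fintype κ]
    {x : ι → Matrix (Fin a) (Fin a) ℂ} {g : ι → Matrix (Fin b) (Fin b) ℂ}
    {y : κ → Matrix (Fin a) (Fin a) ℂ} {k : κ → Matrix (Fin b) (Fin b) ℂ}
    (heq : ∑ i, x i ⊗ₖ g i = ∑ j, y j ⊗ₖ k j) (hg : LinearIndependent ℂ g) (i : ι) :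
    x i ∈ Submodule.span ℂ (Set.range y) := by
  classical
  obtain ⟨ψ, hψ⟩ := LinearMap.exists_leftInverse_of_injective
    (Finsupp.linearCombination ℂ g) (LinearMap.ker_eq_bot.2 hg)
  have hdual : ∀ l, (Finsupp.lapply i ∘ₗ ψ) (g l) = if l = i then (1 : ℂ) else 0 := by
    intro l
    have hl := LinearMap.congr_fun hψ (Finsupp.single l 1)
    simp only [LinearMap.comp_apply, Finsupp.linearCombination_single, one_smul,
      LinearMap.id_apply] at hl
    simp [hl, Finsupp.single_apply]
  have hx := slice_eq_of_kronecker_sum_eq heq (Finsupp.lapply i ∘ₗ ψ)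
  simp only [hdual, ite_smul, one_smul, zero_smul, Finset.sum_ite_eq', Finset.mem_univ,
    if_true] at hx
  rw [hx]
  exact Submodule.sum_mem _ fun j _ =>
    Submodule.smul_mem _ _ (Submodule.subset_span (Set.mem_range_self j))

lemma adjoin_range_le_of_kronecker_sum_eq {a b : ℕ} {ι κ : Type} [Fintype ι] [Fintype κ]
    {x : ι → Matrix (Fin a) (Fin a) ℂ} {g : ι → Matrix (Fin b) (Fin b) ℂ}
    {y : κ → Matrix (Fin a) (Fin a) ℂ} {k : κ → Matrix (Fin b) (Fin b) ℂ}
    (heq : ∑ i, x i ⊗ₖ g i = ∑ j, y j ⊗ₖ k j) (hg : LinearIndependent ℂ g) :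
    StarAlgebra.adjoin ℂ (Set.range x) ≤ StarAlgebra.adjoin ℂ (Set.range y) := by
  refine StarAlgebra.adjoin_le ?_
  rintro _ ⟨i, rfl⟩
  have hspan : Submodule.span ℂ (Set.range y) ≤
      Subalgebra.toSubmodule (StarAlgebra.adjoin ℂ (Set.range y)).toSubalgebra :=
    Submodule.span_le.2 (StarAlgebra.subset_adjoin ℂ (Set.range y))
  exact hspan (mem_span_range_of_kronecker_sum_eq heq hg i)

/-- Claim B.3 of Aharonov–Kenneth–Vigdorovich: the induced algebra of a Hermitian
two-body term `h` on the first subsystem is independent of the decomposition of `h`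
chosen, provided the components on the second subsystem are linearly independent. -/
theorem induced_algebra_well_defined (a b : ℕ) (ha : 1 ≤ a) (hb : 1 ≤ b)
    (h : Matrix (Fin a × Fin b) (Fin a × Fin b) ℂ) (hherm : hᴴ = h)
    (ι κ : Type) [Fintype ι] [Fintype κ]
    (h₁ : ι → Matrix (Fin a) (Fin a) ℂ) (g₁ : ι → Matrix (Fin b) (Fin b) ℂ)
    (h₂ : κ → Matrix (Fin a) (Fin a) ℂ) (g₂ : κ → Matrix (Fin b) (Fin b) ℂ)
    (hdec₁ : h = ∑ i, h₁ i ⊗ₖ g₁ i)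
    (hdec₂ : h = ∑ j, h₂ j ⊗ₖ g₂ j)
    (hli₁ : LinearIndependent ℂ g₁)
    (hli₂ : LinearIndependent ℂ g₂) :
    StarAlgebra.adjoin ℂ (Set.range h₁) = StarAlgebra.adjoin ℂ (Set.range h₂) := by
  have heq := hdec₁.symm.trans hdec₂
  exact le_antisymm (adjoin_range_le_of_kronecker_sum_eq heq hli₁)
    (adjoin_range_le_of_kronecker_sum_eq heq.symm hli₂)
end

section
/- Let A and B be unital star-subalgebras of the 2×2 complex matrices such that a·b = b·a for every a ∈ A and b ∈ B. If A contains a matrix that is not a scalar multiple of the identity and B contains a matrix that is not a scalar multiple of the identity, then there exists a 2×2 unitary matrix u such that uᴴ·m·u is a diagonal matrix for every m ∈ A and for every m ∈ B. -/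
/-!
A unital star-subalgebra with a non-scalar element `m` contains a non-scalar Hermitian one, since
`m` is a combination of the Hermitian elements `m + mᴴ` and `i (m - mᴴ)`. Let the unitary `u`
diagonalize a non-scalar Hermitian `h ∈ A`. A `2 × 2` matrix commuting with a non-scalar diagonal
matrix is itself diagonal (`isDiag_of_commute`), so `uᴴ * b * u` is diagonal for each `b ∈ B`.
Applied to a non-scalar `b ∈ B`, this gives a non-scalar diagonal matrix with which every
`uᴴ * a * u`, `a ∈ A`, commutes, so these are diagonal as well.
-/

open Matrix

/-- In dimension two a non-scalar diagonal matrix has distinct diagonal entries, so its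
commutant consists of diagonal matrices. -/
lemma isDiag_of_commute {d x : Matrix (Fin 2) (Fin 2) ℂ} (hd : d.IsDiag)
    (hns : ∀ c : ℂ, d ≠ c • (1 : Matrix (Fin 2) (Fin 2) ℂ)) (hx : d * x = x * d) :
    x.IsDiag := by
  have h01 : d 0 1 = 0 := hd (by decide)
  have h10 : d 1 0 = 0 := hd (by decide)
  have hne : d 0 0 - d 1 1 ≠ 0 := by
    intro h
    refine hns (d 0 0) ?_
    ext i j
    fin_cases i <;> fin_cases j <;> simp [h01, h10]
    exact (sub_eq_zero.mp h).symm
  have e01 := congrFun (congrFun hx 0) 1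
  have e10 := congrFun (congrFun hx 1) 0
  simp only [Matrix.mul_apply, Fin.sum_univ_two, h01, h10] at e01 e10
  have x01 : x 0 1 = 0 := (mul_eq_zero.mp (by linear_combination e01 :
    (d 0 0 - d 1 1) * x 0 1 = 0)).resolve_left hne
  have x10 : x 1 0 = 0 := (mul_eq_zero.mp (by linear_combination -e10 :
    (d 0 0 - d 1 1) * x 1 0 = 0)).resolve_left hne
  intro i j hij
  fin_cases i <;> fin_cases j <;> simp_all

lemma exists_isHermitian_nonscalar (A : StarSubalgebra ℂ (Matrix (Fin 2) (Fin 2) ℂ))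
    (hA : ∃ m ∈ A, ∀ c : ℂ, m ≠ c • (1 : Matrix (Fin 2) (Fin 2) ℂ)) :
    ∃ h ∈ A, h.IsHermitian ∧ ∀ c : ℂ, h ≠ c • (1 : Matrix (Fin 2) (Fin 2) ℂ) := by
  obtain ⟨m, hm, hns⟩ := hA
  have hm' : mᴴ ∈ A := star_mem hm
  by_contra! hcon
  obtain ⟨c, hc⟩ := hcon (m + mᴴ) (add_mem hm hm') (isHermitian_add_transpose_self m)
  obtain ⟨e, he⟩ := hcon (Complex.I • (m - mᴴ)) (A.smul_mem (sub_mem hm hm') _) (by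
    rw [IsHermitian, conjTranspose_smul, conjTranspose_sub, conjTranspose_conjTranspose]
    simp [smul_sub, neg_add_eq_sub])
  refine hns ((c - Complex.I * e) / 2) ?_
  have key : (2 : ℂ) • m = (m + mᴴ) - Complex.I • (Complex.I • (m - mᴴ)) := by
    rw [smul_smul, Complex.I_mul_I]
    module
  rw [hc, he] at key
  calc m = (1 / 2 : ℂ) • ((2 : ℂ) • m) := by module
    _ = _ := by rw [key]; module

/-- If two commuting unital star-subalgebras of the `2 × 2` complex matrices each contain
a non-scalar element, then they are simultaneously diagonalizable by a single unitary. -/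
theorem commuting_nontrivial_qubit_algebras_simultaneously_diagonal
    (A B : StarSubalgebra ℂ (Matrix (Fin 2) (Fin 2) ℂ))
    (hcomm : ∀ a ∈ A, ∀ b ∈ B, a * b = b * a)
    (hA : ∃ m ∈ A, ∀ c : ℂ, m ≠ c • (1 : Matrix (Fin 2) (Fin 2) ℂ))
    (hB : ∃ m ∈ B, ∀ c : ℂ, m ≠ c • (1 : Matrix (Fin 2) (Fin 2) ℂ)) :
    ∃ u : Matrix (Fin 2) (Fin 2) ℂ, u * uᴴ = 1 ∧ uᴴ * u = 1 ∧
      (∀ m ∈ A, (uᴴ * m * u).IsDiag) ∧ (∀ m ∈ B, (uᴴ * m * u).IsDiag) := by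
  obtain ⟨h, hhA, hh, hhns⟩ := exists_isHermitian_nonscalar A hA
  obtain ⟨b, hbB, hbns⟩ := hB
  obtain ⟨u, huu, huu', hdiag⟩ : ∃ u : Matrix (Fin 2) (Fin 2) ℂ,
      u * uᴴ = 1 ∧ uᴴ * u = 1 ∧ (uᴴ * h * u).IsDiag := by
    refine ⟨hh.eigenvectorUnitary, Unitary.coe_mul_star_self _, Unitary.coe_star_mul_self _, ?_⟩
    have := hh.conjStarAlgAut_star_eigenvectorUnitary
    rw [Unitary.conjStarAlgAut_star_apply] at this
    rw [← star_eq_conjTranspose, this]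
    exact isDiag_diagonal _
  have hmul (x y : Matrix (Fin 2) (Fin 2) ℂ) :
      (uᴴ * x * u) * (uᴴ * y * u) = uᴴ * (x * y) * u := by
    calc _ = uᴴ * x * (u * uᴴ) * y * u := by simp only [Matrix.mul_assoc]
      _ = _ := by rw [huu]; simp only [Matrix.mul_assoc, Matrix.mul_one]
  have hns (x : Matrix (Fin 2) (Fin 2) ℂ)
      (hx : ∀ c : ℂ, x ≠ c • (1 : Matrix (Fin 2) (Fin 2) ℂ)) (c : ℂ) :
      uᴴ * x * u ≠ c • (1 : Matrix (Fin 2) (Fin 2) ℂ) := by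
    intro hc
    refine hx c ?_
    calc x = (u * uᴴ) * x * (u * uᴴ) := by simp [huu]
      _ = u * (uᴴ * x * u) * uᴴ := by simp only [Matrix.mul_assoc]
      _ = _ := by simp [hc, huu]
  have hBdiag : ∀ m ∈ B, (uᴴ * m * u).IsDiag := fun m hm =>
    isDiag_of_commute hdiag (hns h hhns) (by rw [hmul, hmul, hcomm h hhA m hm])
  exact ⟨u, huu, huu', fun m hm => isDiag_of_commute (hBdiag b hbB) (hns b hbns)
    (by rw [hmul, hmul, hcomm m hm b hbB]), hBdiag⟩
end

section
/- Fix an integer L ≥ 3, let V = ZMod L × ZMod L, and let h be a Hermitian matrix in Matrix (Bool × Bool) (Bool × Bool) ℂ. For an ordered pair of distinct sites (v,w) ∈ V × V, let h^{vw} ∈ Matrix (V → Bool) (V → Bool) ℂ be the embedding of h on sites v,w: h^{vw}[x,y] = h[(x v, x w),(y v, y w)] if x u = y u for all u ∉ {v,w}, and 0 otherwise; similarly for a 2×2 matrix m and a site v let m^{v}[x,y] = m[x v, y v] if x u = y u for all u ≠ v, and 0 otherwise. Let E be the set of edges (v, v+(1,0)) and (v, v+(0,1)) for v ∈ V, and let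 H = Σ_{(v,w) ∈ E} h^{vw}. Assume the terms pairwise commute: h^{vw}·h^{v'w'} = h^{v'w'}·h^{vw} for all (v,w), (v',w') ∈ E. Then there exist a 2×2 unitary matrix u and real numbers a, b, β such that, with W ∈ Matrix (V → Bool) (V → Bool) ℂ defined by W[x,y] = ∏_{v ∈ V} u[x v, y v], one has Wᴴ · H · W = a·I + b·Σ_{v ∈ V} Z^{v} + β·Σ_{(v,w) ∈ E} Z^{v}·Z^{w}, where Z = diag(1,−1) and I is the identity on ℂ^{(V → Bool)}. -/
/-!
Fixing the row and column index of one qubit of `h` gives `2 × 2` blocks acting on the other qubit;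
these slices generate the algebras that `h` induces on its two qubits. Two edges meeting in exactly
one site commute only if their slices at that site commute (`slices_commute`). On the torus every
site is the first endpoint of two edges and the second endpoint of two edges, so the slices on the
first qubit, those on the second qubit, and the mixed pairs all commute. As `h` is Hermitian, this
commuting family is closed under adjoints, hence diagonalized by a single unitary `u`
(`exists_unitary_diagonalizing`), and `h` becomes real diagonal in the basis `u ⊗ u`
(`exists_kronecker_diagonal`).

The change of basis lifts to the lattice (`emb2_mul_sitewise`,
`sitewise_conjTranspose_mul_self`), and a real function of two bits is a combination of
`1, zᵢ, zⱼ, zᵢ zⱼ`, which gives the Ising form edge by edge. Translation invariance merges the two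
one-body coefficients into a uniform field.
-/
open Matrix

/-- Embedding of a two-qubit term `h` on the (ordered) pair of distinct sites `(v, w)`
of the torus, acting as identity on all other sites. -/
noncomputable def emb2 {L : ℕ} [NeZero L] (v w : ZMod L × ZMod L)
    (h : Matrix (Bool × Bool) (Bool × Bool) ℂ) :
    Matrix ((ZMod L × ZMod L) → Bool) ((ZMod L × ZMod L) → Bool) ℂ :=
  fun x y => if ∀ u, u ≠ v → u ≠ w → x u = y u then h (x v, x w) (y v, y w) else 0

/-- Embedding of a single-qubit term `m` on the site `v` of the torus, acting as
identity on all other sites. -/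
noncomputable def emb1 {L : ℕ} [NeZero L] (v : ZMod L × ZMod L)
    (m : Matrix Bool Bool ℂ) :
    Matrix ((ZMod L × ZMod L) → Bool) ((ZMod L × ZMod L) → Bool) ℂ :=
  fun x y => if ∀ u, u ≠ v → x u = y u then m (x v) (y v) else 0

/-- The edge set of the `L × L` periodic lattice: each site is joined to its right and
upper neighbours. -/
noncomputable def torusEdges (L : ℕ) [NeZero L] :
    Finset ((ZMod L × ZMod L) × (ZMod L × ZMod L)) :=
  Finset.univ.image (fun v : ZMod L × ZMod L => (v, v + (1, 0))) ∪
    Finset.univ.image (fun v : ZMod L × ZMod L => (v, v + (0, 1)))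

/-- The Pauli-Z matrix `diag (1, -1)` on a qubit indexed by `Bool`. -/
def ZBool : Matrix Bool Bool ℂ :=
  fun x y => if x = y then (if x then -1 else 1) else 0

/-- The global change of basis obtained by applying the single-qubit unitary `u` on
every site of the torus. -/
noncomputable def sitewise {L : ℕ} [NeZero L] (u : Matrix Bool Bool ℂ) :
    Matrix ((ZMod L × ZMod L) → Bool) ((ZMod L × ZMod L) → Bool) ℂ :=
  fun x y => ∏ v : ZMod L × ZMod L, u (x v) (y v)


/-! ### Sums over configurations -/

/-- Summing over configurations that agree with `x` off two sites amounts to summing over the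
values at these two sites. -/
lemma sum_agree_off_two {V : Type*} [Fintype V] [DecidableEq V] {v w : V} (hvw : v ≠ w)
    (x : V → Bool) (F : (V → Bool) → ℂ) :
    (∑ z, if ∀ t, t ≠ v → t ≠ w → x t = z t then F z else 0) =
      ∑ s, ∑ t, F (Function.update (Function.update x v s) w t) := by
  classical
  rw [← Finset.sum_filter, ← Fintype.sum_prod_type']
  refine Finset.sum_bij' (fun z _ => (z v, z w))
    (fun st _ => Function.update (Function.update x v st.1) w st.2) ?_ ?_ ?_ ?_ ?_
  · simp
  · intro st _
    simp only [Finset.mem_filter, Finset.mem_univ, true_and]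
    intro t h1 h2
    simp [h1, h2]
  · intro z hz
    simp only [Finset.mem_filter, Finset.mem_univ, true_and] at hz
    funext t
    by_cases h2 : t = w
    · subst h2; simp
    · by_cases h1 : t = v
      · subst h1; simp [h2]
      · simp [h1, h2, hz t h1 h2]
  · intro st _
    simp [hvw]
  · intro z hz
    simp only [Finset.mem_filter, Finset.mem_univ, true_and] at hz
    congr 1
    funext t
    by_cases h2 : t = w
    · subst h2; simp
    · by_cases h1 : t = v
      · subst h1; simp [h2]
      · simp [h1, h2, hz t h1 h2]

/-! ### Slices of a two-qubit term and their commutation -/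

/-- The operators induced by `h` on its first qubit: the blocks of `h` obtained by fixing the row
and column index of the second qubit. Their span is the smallest
space `A` of `2 × 2` matrices with `h ∈ A ⊗ Mat₂`. -/
def sliceFst (h : Matrix (Bool × Bool) (Bool × Bool) ℂ) (k l : Bool) : Matrix Bool Bool ℂ :=
  fun i j => h (i, k) (j, l)

/-- `h` with the roles of its two qubits exchanged. -/
def swapTerm (h : Matrix (Bool × Bool) (Bool × Bool) ℂ) :
    Matrix (Bool × Bool) (Bool × Bool) ℂ :=
  fun p q => h p.swap q.swap

lemma emb2_swapTerm {L : ℕ} [NeZero L] (v w : ZMod L × ZMod L)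
    (h : Matrix (Bool × Bool) (Bool × Bool) ℂ) : emb2 w v (swapTerm h) = emb2 v w h := by
  funext x y
  unfold emb2
  refine if_congr ?_ rfl rfl
  exact ⟨fun H u h1 h2 => H u h2 h1, fun H u h1 h2 => H u h2 h1⟩

/-- Two terms sharing exactly the site `v` multiply, entrywise, like their slices at `v`. -/
lemma emb2_mul_emb2_apply {L : ℕ} [NeZero L] {v w w' : ZMod L × ZMod L}
    (hvw : v ≠ w) (hvw' : v ≠ w') (hww' : w ≠ w')
    (g k : Matrix (Bool × Bool) (Bool × Bool) ℂ) (x y : ZMod L × ZMod L → Bool)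
    (hxy : ∀ u, u ≠ v → u ≠ w → u ≠ w' → x u = y u) :
    (emb2 v w g * emb2 v w' k) x y =
      (sliceFst g (x w) (y w) * sliceFst k (x w') (y w')) (x v) (y v) := by
  have key : (emb2 v w g * emb2 v w' k) x y =
      ∑ z, if ∀ t, t ≠ v → t ≠ w → x t = z t then
        g (x v, x w) (z v, z w) * emb2 v w' k z y else 0 := by
    rw [Matrix.mul_apply]
    refine Finset.sum_congr rfl fun z _ => ?_
    simp only [emb2, ite_mul, zero_mul]
  rw [key, sum_agree_off_two hvw, Matrix.mul_apply]
  refine Finset.sum_congr rfl fun s _ => ?_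
  rw [Finset.sum_eq_single (y w)]
  · simp only [emb2]
    rw [if_pos]
    · simp [sliceFst, hvw, hvw'.symm, hww'.symm]
    · intro u h1 h2
      by_cases h3 : u = w
      · subst h3; simp
      · simp [h1, h3, hxy u h1 h3 h2]
  · intro t _ ht
    simp only [emb2]
    rw [if_neg, mul_zero]
    intro H
    apply ht
    simpa using H w hvw.symm hww'
  · simp

/-- Commutation of two terms sharing one site forces their slices at that site to commute. -/
lemma slices_commute {L : ℕ} [NeZero L] {v w w' : ZMod L × ZMod L}
    (hvw : v ≠ w) (hvw' : v ≠ w') (hww' : w ≠ w')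
    (g k : Matrix (Bool × Bool) (Bool × Bool) ℂ)
    (hc : emb2 v w g * emb2 v w' k = emb2 v w' k * emb2 v w g) (a b c d : Bool) :
    sliceFst g a b * sliceFst k c d = sliceFst k c d * sliceFst g a b := by
  ext i j
  let x : ZMod L × ZMod L → Bool := fun u => if u = v then i else if u = w then a else c
  let y : ZMod L × ZMod L → Bool :=
    fun u => if u = v then j else if u = w then b else if u = w' then d else c
  have hxy : ∀ u, u ≠ v → u ≠ w → u ≠ w' → x u = y u := by
    intro u h1 h2 h3
    simp [x, y, h1, h2, h3]
  have e := congrFun (congrFun hc x) y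
  rw [emb2_mul_emb2_apply hvw hvw' hww' g k x y hxy,
    emb2_mul_emb2_apply hvw' hvw hww'.symm k g x y (fun u h1 h2 h3 => hxy u h1 h3 h2)] at e
  simpa [x, y, hvw.symm, hvw'.symm, hww'.symm] using e

/-! ### Simultaneous diagonalization -/

lemma isHermitian_commutant_diagonal (N : Matrix Bool Bool ℂ) (hN : N.IsHermitian)
    (hns : ∀ c : ℂ, N ≠ c • 1) :
    ∃ u : Matrix Bool Bool ℂ, u * uᴴ = 1 ∧ uᴴ * u = 1 ∧
      ∀ M, M * N = N * M → ∀ i j, i ≠ j → (uᴴ * M * u) i j = 0 := by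
  obtain ⟨u, e, hu1, hu2, hsp⟩ : ∃ (u : Matrix Bool Bool ℂ) (e : Bool → ℂ),
      u * uᴴ = 1 ∧ uᴴ * u = 1 ∧ N = u * diagonal e * uᴴ := by
    refine ⟨hN.eigenvectorUnitary, fun i => (hN.eigenvalues i : ℂ), ?_, ?_, ?_⟩
    · exact Unitary.coe_mul_star_self hN.eigenvectorUnitary
    · exact Unitary.coe_star_mul_self hN.eigenvectorUnitary
    · have := hN.spectral_theorem
      rw [Unitary.conjStarAlgAut_apply] at this
      exact this
  refine ⟨u, hu1, hu2, fun M hM i j hij => ?_⟩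
  have hne : e false ≠ e true := by
    intro he
    apply hns (e false)
    have : diagonal e = e false • (1 : Matrix Bool Bool ℂ) := by
      ext a b
      cases a <;> cases b <;> simp [he]
    rw [hsp, this]
    simp [hu1]
  have hcomm : (uᴴ * M * u) * diagonal e = diagonal e * (uᴴ * M * u) := by
    have h1 : diagonal e = uᴴ * N * u := by
      rw [hsp]
      calc diagonal e = 1 * diagonal e * 1 := by simp
        _ = (uᴴ * u) * diagonal e * (uᴴ * u) := by rw [hu2]
        _ = _ := by simp only [Matrix.mul_assoc]
    rw [h1]
    calc uᴴ * M * u * (uᴴ * N * u) = uᴴ * M * (u * uᴴ) * N * u := by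
          simp only [Matrix.mul_assoc]
      _ = uᴴ * (M * N) * u := by rw [hu1]; simp only [Matrix.mul_assoc, Matrix.one_mul]
      _ = uᴴ * N * (u * uᴴ) * M * u := by
          rw [hM, hu1]; simp only [Matrix.mul_assoc, Matrix.one_mul]
      _ = _ := by simp only [Matrix.mul_assoc]
  have hij' := congrFun (congrFun hcomm i) j
  rw [Matrix.mul_diagonal, Matrix.diagonal_mul] at hij'
  have hd : e j - e i ≠ 0 := by
    rw [sub_ne_zero]
    cases i <;> cases j <;> simp_all [eq_comm]
  have : (uᴴ * M * u) i j * (e j - e i) = 0 := by linear_combination hij'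
  exact (mul_eq_zero.mp this).resolve_right hd

/-- A commuting family of `2 × 2` matrices closed under adjoints is simultaneously unitarily
diagonalizable: either all members are scalar, or the real or imaginary part of a nonscalar one is
a Hermitian matrix with simple spectrum commuting with the whole family. -/
lemma exists_unitary_diagonalizing (S : Set (Matrix Bool Bool ℂ)) (hS : ∀ M ∈ S, Mᴴ ∈ S)
    (hc : ∀ M ∈ S, ∀ N ∈ S, M * N = N * M) :
    ∃ u : Matrix Bool Bool ℂ, u * uᴴ = 1 ∧ uᴴ * u = 1 ∧
      ∀ M ∈ S, ∀ i j, i ≠ j → (uᴴ * M * u) i j = 0 := by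
  by_cases hall : ∀ M ∈ S, ∃ c : ℂ, M = c • 1
  · refine ⟨1, by simp, by simp, fun M hM i j hij => ?_⟩
    obtain ⟨c, rfl⟩ := hall M hM
    simp [hij]
  · push Not at hall
    obtain ⟨M, hM, hMns⟩ := hall
    have hMs := hS M hM
    by_cases h1 : ∀ c : ℂ, M + Mᴴ ≠ c • 1
    · obtain ⟨u, hu1, hu2, hu⟩ := isHermitian_commutant_diagonal (M + Mᴴ)
        (by simp [Matrix.IsHermitian, add_comm]) h1
      refine ⟨u, hu1, hu2, fun K hK => hu K ?_⟩
      rw [mul_add, add_mul, hc K hK M hM, hc K hK _ hMs]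
    · push Not at h1
      obtain ⟨c, hcM⟩ := h1
      obtain ⟨u, hu1, hu2, hu⟩ := isHermitian_commutant_diagonal (Complex.I • (M - Mᴴ))
        (by
          simp only [Matrix.IsHermitian, conjTranspose_smul, conjTranspose_sub,
            conjTranspose_conjTranspose, Complex.star_def, Complex.conj_I]
          module)
        (by
          intro d hd
          apply hMns ((c - Complex.I * d) / 2)
          -- `M - Mᴴ = -i d` and `M + Mᴴ = c` would make `M` scalar
          have hd' : M - Mᴴ = (-Complex.I * d) • (1 : Matrix Bool Bool ℂ) := by
            rw [mul_smul, ← hd, smul_smul]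
            simp
          have h2 : (2 : ℂ) • M = (M + Mᴴ) + (M - Mᴴ) := by module
          have h3 : M = (2⁻¹ : ℂ) • ((2 : ℂ) • M) := by
            rw [smul_smul]; norm_num
          rw [h3, h2, hcM, hd']
          module)
      refine ⟨u, hu1, hu2, fun K hK => hu K ?_⟩
      rw [mul_smul_comm, smul_mul_assoc, mul_sub, sub_mul, hc K hK M hM, hc K hK _ hMs]

/-- If `u` diagonalizes all slices of a Hermitian `h` on both qubits, then `u ⊗ u` conjugates `h`
to a real diagonal matrix. -/
lemma exists_kronecker_diagonal (h : Matrix (Bool × Bool) (Bool × Bool) ℂ) (hherm : hᴴ = h)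
    (u : Matrix Bool Bool ℂ) (hu1 : u * uᴴ = 1)
    (hA : ∀ k l i j, i ≠ j → (uᴴ * sliceFst h k l * u) i j = 0)
    (hB : ∀ k l i j, i ≠ j → (uᴴ * sliceFst (swapTerm h) k l * u) i j = 0) :
    ∃ d : Bool × Bool → ℝ,
      h * kronecker u u = kronecker u u * diagonal (fun p => (d p : ℂ)) := by
  set K := kronecker u u with hK
  have hKK : K * Kᴴ = 1 := by
    rw [hK, Matrix.kronecker, Matrix.conjTranspose_kronecker, ← Matrix.mul_kronecker_mul, hu1,
      Matrix.one_kronecker_one]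
  set D := Kᴴ * h * K with hD
  have hDherm : Dᴴ = D := by
    simp only [hD, conjTranspose_mul, conjTranspose_conjTranspose, hherm, Matrix.mul_assoc]
  have hoff1 : ∀ i k j l, i ≠ j → D (i, k) (j, l) = 0 := by
    intro i k j l hij
    have e : D (i, k) (j, l) =
        ∑ c, ∑ d, star (u c k) * u d l * (uᴴ * sliceFst h c d * u) i j := by
      simp only [hD, hK, Matrix.mul_apply, conjTranspose_apply, Matrix.kronecker,
        Matrix.kroneckerMap_apply, sliceFst, Fintype.sum_prod_type, Fintype.sum_bool, star_mul']
      ring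
    rw [e]
    simp [hA _ _ i j hij]
  have hoff2 : ∀ i k j l, k ≠ l → D (i, k) (j, l) = 0 := by
    intro i k j l hkl
    have e : D (i, k) (j, l) =
        ∑ c, ∑ d, star (u c i) * u d j * (uᴴ * sliceFst (swapTerm h) c d * u) k l := by
      simp only [hD, hK, Matrix.mul_apply, conjTranspose_apply, Matrix.kronecker,
        Matrix.kroneckerMap_apply, sliceFst, swapTerm, Prod.swap, Fintype.sum_prod_type,
        Fintype.sum_bool, star_mul']
      ring
    rw [e]
    simp [hB _ _ k l hkl]
  refine ⟨fun p => (D p p).re, ?_⟩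
  have hdiag : diagonal (fun p => (((D p p).re : ℝ) : ℂ)) = D := by
    ext ⟨i, k⟩ ⟨j, l⟩
    by_cases hij : i = j
    · by_cases hkl : k = l
      · subst hij hkl
        rw [diagonal_apply_eq]
        exact Complex.conj_eq_iff_re.mp (congrFun (congrFun hDherm (i, k)) (i, k))
      · rw [hoff2 _ _ _ _ hkl, diagonal_apply_ne _ (by simp [hkl])]
    · rw [hoff1 _ _ _ _ hij, diagonal_apply_ne _ (by simp [hij])]
  rw [hdiag, hD, ← Matrix.mul_assoc, ← Matrix.mul_assoc, hKK, Matrix.one_mul]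

/-! ### The global change of basis -/

lemma sitewise_conjTranspose_mul_self {L : ℕ} [NeZero L] (u : Matrix Bool Bool ℂ)
    (hu : uᴴ * u = 1) : (sitewise (L := L) u)ᴴ * sitewise (L := L) u = 1 := by
  ext x y
  have e : ∀ v : ZMod L × ZMod L, (∑ s, star (u s (x v)) * u s (y v)) =
      (1 : Matrix Bool Bool ℂ) (x v) (y v) := by
    intro v
    rw [← hu, Matrix.mul_apply]
    rfl
  calc ((sitewise (L := L) u)ᴴ * sitewise (L := L) u) x y
      = ∑ z : ZMod L × ZMod L → Bool, ∏ v, star (u (z v) (x v)) * u (z v) (y v) := by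
        rw [Matrix.mul_apply]
        refine Finset.sum_congr rfl fun z _ => ?_
        simp only [sitewise, conjTranspose_apply, star_prod, Finset.prod_mul_distrib]
    _ = ∏ v, ∑ s, star (u s (x v)) * u s (y v) := by
        rw [Finset.prod_univ_sum, Fintype.piFinset_univ]
    _ = (1 : Matrix _ _ ℂ) x y := by
        simp_rw [e]
        by_cases hxy : x = y
        · subst hxy; simp
        · rw [Matrix.one_apply_ne hxy]
          obtain ⟨v, hv⟩ := Function.ne_iff.mp hxy
          exact Finset.prod_eq_zero (Finset.mem_univ v) (Matrix.one_apply_ne hv)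

lemma prod_eq_two_mul_rest {V : Type*} [Fintype V] [DecidableEq V] {v w : V} (hvw : v ≠ w)
    (F : V → ℂ) : ∏ t, F t = F v * F w * ∏ t ∈ (Finset.univ.erase v).erase w, F t := by
  rw [← Finset.mul_prod_erase _ F (Finset.mem_univ v),
    ← Finset.mul_prod_erase _ F (Finset.mem_erase.mpr ⟨hvw.symm, Finset.mem_univ w⟩), mul_assoc]

/-- An intertwining relation by `u ⊗ u` between two-qubit terms lifts to the whole lattice. -/
lemma emb2_mul_sitewise {L : ℕ} [NeZero L] {v w : ZMod L × ZMod L} (hvw : v ≠ w)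
    (h D : Matrix (Bool × Bool) (Bool × Bool) ℂ) (u : Matrix Bool Bool ℂ)
    (hD : h * kronecker u u = kronecker u u * D) :
    emb2 v w h * sitewise (L := L) u = sitewise (L := L) u * emb2 v w D := by
  ext x y
  have hl : (emb2 v w h * sitewise (L := L) u) x y =
      ∑ z : ZMod L × ZMod L → Bool, if ∀ t, t ≠ v → t ≠ w → x t = z t then
        h (x v, x w) (z v, z w) * ∏ t, u (z t) (y t) else 0 := by
    rw [Matrix.mul_apply]
    refine Finset.sum_congr rfl fun z _ => ?_
    simp only [emb2, sitewise, ite_mul, zero_mul]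
  have hr : (sitewise (L := L) u * emb2 v w D) x y =
      ∑ z : ZMod L × ZMod L → Bool, if ∀ t, t ≠ v → t ≠ w → y t = z t then
        (∏ t, u (x t) (z t)) * D (z v, z w) (y v, y w) else 0 := by
    rw [Matrix.mul_apply]
    refine Finset.sum_congr rfl fun z _ => ?_
    simp only [emb2, sitewise, mul_ite, mul_zero]
    refine if_congr ?_ rfl rfl
    exact ⟨fun H t h1 h2 => (H t h1 h2).symm, fun H t h1 h2 => (H t h1 h2).symm⟩
  rw [hl, hr, sum_agree_off_two hvw, sum_agree_off_two hvw]
  have hrl : ∀ s t, ∏ r ∈ (Finset.univ.erase v).erase w,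
      u (Function.update (Function.update x v s) w t r) (y r) =
      ∏ r ∈ (Finset.univ.erase v).erase w, u (x r) (y r) := by
    intro s t
    refine Finset.prod_congr rfl fun r hr => ?_
    simp only [Finset.mem_erase, Finset.mem_univ, and_true] at hr
    simp [hr.1, hr.2]
  have hrr : ∀ s t, ∏ r ∈ (Finset.univ.erase v).erase w,
      u (x r) (Function.update (Function.update y v s) w t r) =
      ∏ r ∈ (Finset.univ.erase v).erase w, u (x r) (y r) := by
    intro s t
    refine Finset.prod_congr rfl fun r hr => ?_
    simp only [Finset.mem_erase, Finset.mem_univ, and_true] at hr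
    simp [hr.1, hr.2]
  have e := congrFun (congrFun hD (x v, x w)) (y v, y w)
  simp only [Matrix.mul_apply, Matrix.kronecker, Matrix.kroneckerMap_apply,
    Fintype.sum_prod_type] at e
  simp only [prod_eq_two_mul_rest hvw, hrl, hrr, Function.update_self,
    Function.update_of_ne hvw]
  have e' := congrArg (· * ∏ r ∈ (Finset.univ.erase v).erase w, u (x r) (y r)) e
  simp only [Finset.sum_mul] at e'
  refine Eq.trans ?_ (e'.trans ?_)
  · exact Finset.sum_congr rfl fun s _ => Finset.sum_congr rfl fun t _ => by ring
  · exact Finset.sum_congr rfl fun s _ => Finset.sum_congr rfl fun t _ => by ring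

/-! ### Diagonal operators and sums over edges -/

lemma emb1_ZBool {L : ℕ} [NeZero L] (v : ZMod L × ZMod L) :
    emb1 v ZBool = diagonal (fun x : ZMod L × ZMod L → Bool => if x v then (-1 : ℂ) else 1) := by
  ext x y
  by_cases hxy : x = y
  · subst hxy; simp [emb1, ZBool]
  · rw [diagonal_apply_ne _ hxy]
    simp only [emb1, ZBool]
    split_ifs with h1 h2 <;> try rfl
    all_goals
      exfalso
      apply hxy
      funext t
      by_cases ht : t = v
      · subst ht; assumption
      · exact h1 t ht

/-- A diagonal two-qubit term is an Ising term whose coefficients are those of the expansion of the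
diagonal in the signs of the two bits. -/
lemma emb2_diagonal {L : ℕ} [NeZero L] (v w : ZMod L × ZMod L) (d : Bool × Bool → ℝ)
    (a₀ b₁ b₂ β : ℂ)
    (hd : ∀ i j, (d (i, j) : ℂ) = a₀ + b₁ * (if i then -1 else 1) + b₂ * (if j then -1 else 1) +
      β * ((if i then -1 else 1) * (if j then -1 else 1))) :
    emb2 v w (diagonal (fun p => (d p : ℂ))) =
      a₀ • (1 : Matrix (ZMod L × ZMod L → Bool) (ZMod L × ZMod L → Bool) ℂ) +
      b₁ • emb1 v ZBool + b₂ • emb1 w ZBool + β • (emb1 v ZBool * emb1 w ZBool) := by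
  have e : emb2 v w (diagonal (fun p => (d p : ℂ))) =
      diagonal (fun x : ZMod L × ZMod L → Bool => (d (x v, x w) : ℂ)) := by
    ext x y
    by_cases hxy : x = y
    · subst hxy; simp [emb2]
    · rw [diagonal_apply_ne _ hxy]
      simp only [emb2]
      split_ifs with h1
      · apply diagonal_apply_ne
        intro h2
        rw [Prod.mk.injEq] at h2
        apply hxy
        funext t
        by_cases ht : t = v
        · rw [ht]; exact h2.1
        · by_cases ht' : t = w
          · rw [ht']; exact h2.2
          · exact h1 t ht ht'
      · rfl
  rw [e]
  simp only [emb1_ZBool, diagonal_mul_diagonal, ← diagonal_one, ← diagonal_smul, diagonal_add]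
  congr 1
  funext x
  simp only [hd, Pi.smul_apply, smul_eq_mul, mul_one]

lemma sum_torusEdges {L : ℕ} [NeZero L] (hL : 3 ≤ L) {A : Type*} [AddCommMonoid A]
    (f : (ZMod L × ZMod L) × (ZMod L × ZMod L) → A) :
    ∑ p ∈ torusEdges L, f p = ∑ v, f (v, v + (1, 0)) + ∑ v, f (v, v + (0, 1)) := by
  have : Fact (1 < L) := ⟨by omega⟩
  unfold torusEdges
  rw [Finset.sum_union, Finset.sum_image, Finset.sum_image]
  · intro a _ b _ hab
    exact (Prod.mk.inj hab).1
  · intro a _ b _ hab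
    exact (Prod.mk.inj hab).1
  · rw [Finset.disjoint_left]
    intro p hp hq
    simp only [Finset.mem_image, Finset.mem_univ, true_and] at hp hq
    obtain ⟨a, rfl⟩ := hp
    obtain ⟨b, hb⟩ := hq
    rw [Prod.mk.injEq] at hb
    obtain ⟨rfl, hb⟩ := hb
    simp at hb

/-- The commutation hypothesis makes `h` real diagonal in a product basis `u ⊗ u`. -/
lemma exists_unitary_term_diagonal (L : ℕ) [NeZero L] (hL : 3 ≤ L)
    (h : Matrix (Bool × Bool) (Bool × Bool) ℂ) (hherm : hᴴ = h)
    (hcomm : ∀ p ∈ torusEdges L, ∀ q ∈ torusEdges L,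
      emb2 p.1 p.2 h * emb2 q.1 q.2 h = emb2 q.1 q.2 h * emb2 p.1 p.2 h) :
    ∃ u : Matrix Bool Bool ℂ, u * uᴴ = 1 ∧ uᴴ * u = 1 ∧ ∃ d : Bool × Bool → ℝ,
      h * kronecker u u = kronecker u u * diagonal (fun p => (d p : ℂ)) := by
  have : Fact (1 < L) := ⟨by omega⟩
  have hmem1 : ∀ v : ZMod L × ZMod L, (v, v + (1, 0)) ∈ torusEdges L := fun v => by
    simp [torusEdges]
  have hmem2 : ∀ v : ZMod L × ZMod L, (v, v + (0, 1)) ∈ torusEdges L := fun v => by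
    simp [torusEdges]
  -- Slices of `h` on the first qubit: two edges leaving the origin.
  have c11 : ∀ a b c d, sliceFst h a b * sliceFst h c d = sliceFst h c d * sliceFst h a b := by
    have hc := hcomm _ (hmem1 (0, 0)) _ (hmem2 (0, 0))
    simp only [Prod.mk_add_mk, zero_add, add_zero] at hc
    exact slices_commute (v := ((0, 0) : ZMod L × ZMod L)) (w := (1, 0)) (w' := (0, 1))
      (by simp) (by simp) (by simp) _ _ hc
  -- Slices on the second qubit: two edges entering `(1, 1)`.
  have c22 : ∀ a b c d, sliceFst (swapTerm h) a b * sliceFst (swapTerm h) c d =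
      sliceFst (swapTerm h) c d * sliceFst (swapTerm h) a b := by
    have hc := hcomm _ (hmem1 (0, 1)) _ (hmem2 (1, 0))
    simp only [Prod.mk_add_mk, zero_add, add_zero] at hc
    refine slices_commute (v := ((1, 1) : ZMod L × ZMod L)) (w := (0, 1)) (w' := (1, 0))
      (by simp) (by simp) (by simp) _ _ ?_
    simpa only [emb2_swapTerm] using hc
  -- Mixed slices: one edge entering and one edge leaving `(1, 0)`.
  have c12 : ∀ a b c d, sliceFst h a b * sliceFst (swapTerm h) c d =
      sliceFst (swapTerm h) c d * sliceFst h a b := by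
    have hc := hcomm _ (hmem2 (1, 0)) _ (hmem1 (0, 0))
    simp only [Prod.mk_add_mk, zero_add, add_zero] at hc
    refine slices_commute (v := ((1, 0) : ZMod L × ZMod L)) (w := (1, 1)) (w' := (0, 0))
      (by simp) (by simp) (by simp) _ _ ?_
    simpa only [emb2_swapTerm] using hc
  have hherm' : ∀ p q, star (h p q) = h q p := fun p q => congrFun (congrFun hherm q) p
  let S : Set (Matrix Bool Bool ℂ) :=
    {M | (∃ k l, M = sliceFst h k l) ∨ (∃ k l, M = sliceFst (swapTerm h) k l)}
  obtain ⟨u, hu1, hu2, hu⟩ := exists_unitary_diagonalizing S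
    (by
      rintro M (⟨k, l, rfl⟩ | ⟨k, l, rfl⟩)
      · exact Or.inl ⟨l, k, by ext i j; exact hherm' _ _⟩
      · exact Or.inr ⟨l, k, by ext i j; exact hherm' _ _⟩)
    (by
      rintro M (⟨k, l, rfl⟩ | ⟨k, l, rfl⟩) N (⟨k', l', rfl⟩ | ⟨k', l', rfl⟩)
      · exact c11 _ _ _ _
      · exact c12 _ _ _ _
      · exact (c12 _ _ _ _).symm
      · exact c22 _ _ _ _)
  exact ⟨u, hu1, hu2, exists_kronecker_diagonal h hherm u hu1
    (fun k l => hu _ (Or.inl ⟨k, l, rfl⟩)) (fun k l => hu _ (Or.inr ⟨k, l, rfl⟩))⟩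

/-- Lemma `H2D`: a translation-invariant 2-local qubit commuting Hamiltonian on the
`L × L` torus is, after conjugating by the same single-qubit unitary on every site,
a classical 2D Ising model with a uniform magnetic field. -/
theorem two_local_qubit_CLH_on_torus_is_Ising (L : ℕ) [NeZero L] (hL : 3 ≤ L)
    (h : Matrix (Bool × Bool) (Bool × Bool) ℂ) (hherm : hᴴ = h)
    (hcomm : ∀ p ∈ torusEdges L, ∀ q ∈ torusEdges L,
      emb2 p.1 p.2 h * emb2 q.1 q.2 h = emb2 q.1 q.2 h * emb2 p.1 p.2 h) :
    ∃ (u : Matrix Bool Bool ℂ) (a b β : ℝ),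
      u * uᴴ = 1 ∧ uᴴ * u = 1 ∧
      (sitewise (L := L) u)ᴴ * (∑ p ∈ torusEdges L, emb2 p.1 p.2 h) * sitewise (L := L) u =
        (a : ℂ) • (1 : Matrix ((ZMod L × ZMod L) → Bool) ((ZMod L × ZMod L) → Bool) ℂ) +
          (b : ℂ) • (∑ v : ZMod L × ZMod L, emb1 v ZBool) +
          (β : ℂ) • (∑ p ∈ torusEdges L, emb1 p.1 ZBool * emb1 p.2 ZBool) := by
  have : Fact (1 < L) := ⟨by omega⟩
  have hne : ∀ p ∈ torusEdges L, p.1 ≠ p.2 := by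
    intro p hp
    simp only [torusEdges, Finset.mem_union, Finset.mem_image, Finset.mem_univ, true_and] at hp
    rcases hp with ⟨v, rfl⟩ | ⟨v, rfl⟩ <;> simp
  obtain ⟨u, hu1, hu2, d, hd⟩ := exists_unitary_term_diagonal L hL h hherm hcomm
  -- Walsh coefficients of `d`: its constant, the fields on the two qubits, and the coupling.
  obtain ⟨a₀, b₁, b₂, β, hW⟩ : ∃ a₀ b₁ b₂ β : ℝ, ∀ i j, (d (i, j) : ℂ) =
      (a₀ : ℂ) + (b₁ : ℂ) * (if i then -1 else 1) + (b₂ : ℂ) * (if j then -1 else 1) +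
      (β : ℂ) * ((if i then -1 else 1) * (if j then -1 else 1)) := by
    refine ⟨(d (false, false) + d (false, true) + d (true, false) + d (true, true)) / 4,
      (d (false, false) + d (false, true) - d (true, false) - d (true, true)) / 4,
      (d (false, false) - d (false, true) + d (true, false) - d (true, true)) / 4,
      (d (false, false) - d (false, true) - d (true, false) + d (true, true)) / 4, ?_⟩
    intro i j
    cases i <;> cases j <;> simp <;> ring
  have hconj : (sitewise (L := L) u)ᴴ * (∑ p ∈ torusEdges L, emb2 p.1 p.2 h) *
      sitewise (L := L) u = ∑ p ∈ torusEdges L,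
        ((a₀ : ℂ) • (1 : Matrix (ZMod L × ZMod L → Bool) (ZMod L × ZMod L → Bool) ℂ) +
          (b₁ : ℂ) • emb1 p.1 ZBool + (b₂ : ℂ) • emb1 p.2 ZBool +
          (β : ℂ) • (emb1 p.1 ZBool * emb1 p.2 ZBool)) := by
    rw [Matrix.mul_assoc, Finset.sum_mul, Finset.mul_sum]
    refine Finset.sum_congr rfl fun p hp => ?_
    rw [emb2_mul_sitewise (hne p hp) h _ u hd, ← Matrix.mul_assoc,
      sitewise_conjTranspose_mul_self u hu2, Matrix.one_mul,
      emb2_diagonal p.1 p.2 d _ _ _ _ hW]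
  -- Every site is the source of two edges and the target of two edges.
  have hshift : ∀ c : ZMod L × ZMod L,
      ∑ v : ZMod L × ZMod L, emb1 (v + c) ZBool = ∑ v : ZMod L × ZMod L, emb1 v ZBool :=
    fun c => Equiv.sum_comp (Equiv.addRight c) (fun v => emb1 v ZBool)
  refine ⟨u, (torusEdges L).card * a₀, 2 * (b₁ + b₂), β, hu1, hu2, ?_⟩
  rw [hconj]
  simp only [Finset.sum_add_distrib, ← Finset.smul_sum, Finset.sum_const]
  rw [sum_torusEdges hL (fun p => emb1 p.1 ZBool), sum_torusEdges hL (fun p => emb1 p.2 ZBool)]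
  simp only [hshift]
  push_cast
  module
end
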